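/- arXiv:1912.11104 — 2 statements merged into one kernel-verified Lean document; each statement's English description precedes it below -/
import Mathlib

section
/- Let G be a graph of the tetrahedral model and let {e_L, e_R} be two color-0 edges that do not form a 2-edge-cut. For any flip of {e_L, e_R}, and for each color c ∈ {1,2,3}, the variation of the number of faces of color c satisfies |F_c(G') − F_c(G)| ≤ 1. -/
/-!  A combinatorial model of the Feynman graphs of the rank-3 tetrahedral
(`O(N)^3`) tensor model.

A graph consists of a finite set `B` of bubbles (copies of the tetrahedron
`K_4`); each bubble has four vertices, so the vertex set is `B × Fin 4`.
Inside every bubble the edges of colors `1,2,3` are given once and for all by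
the three fixed-point-free involutions of `Fin 4` (the proper 3-edge-coloring
of `K_4`).  The color-0 propagator edges, one per vertex, are encoded by a
fixed-point-free involution `pairing` of the vertex set. -/

open Equiv

/-- The color-`c` (for `c ∈ {1,2,3}`, here `c : Fin 3`) perfect matching on the
four vertices of a tetrahedral bubble. -/
def bubblePerm : Fin 3 → Equiv.Perm (Fin 4) :=
  ![Equiv.swap 0 1 * Equiv.swap 2 3,
    Equiv.swap 0 2 * Equiv.swap 1 3,
    Equiv.swap 0 3 * Equiv.swap 1 2]

/-- A Feynman graph of the tetrahedral tensor model: a finite set of `K_4`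
bubbles together with a fixed-point-free involution of the vertex set
describing the color-0 edges. -/
structure TGraph where
  B : Type
  [fintypeB : Fintype B]
  [decB : DecidableEq B]
  pairing : Equiv.Perm (B × Fin 4)
  invol : ∀ v, pairing (pairing v) = v
  fixfree : ∀ v, pairing v ≠ v

attribute [instance] TGraph.fintypeB TGraph.decB

namespace TGraph

/-- The vertex set of a graph. -/
abbrev V (G : TGraph) : Type := G.B × Fin 4

/-- The permutation of the vertices given by the color-`c` edges inside the
bubbles. -/
def colPerm (G : TGraph) (c : Fin 3) : Equiv.Perm G.V :=
  (Equiv.refl G.B).prodCongr (bubblePerm c)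

/-- The number of bubbles of a graph. -/
def b (G : TGraph) : ℕ := Fintype.card G.B

/-- The subgroup of permutations of the vertices generated by the color-0
pairing and the color-`c` matching: its orbits are exactly the faces of
color `c` (cycles alternating colors `0` and `c`). -/
def faceGroup (G : TGraph) (c : Fin 3) : Subgroup (Equiv.Perm G.V) :=
  Subgroup.closure {G.pairing, G.colPerm c}

/-- Two vertices lie on the same face of color `c`. -/
def sameFace (G : TGraph) (c : Fin 3) (u v : G.V) : Prop :=
  u ∈ MulAction.orbit (G.faceGroup c) v

/-- The number of faces of color `c` of the graph. -/
noncomputable def numFaces (G : TGraph) (c : Fin 3) : ℕ :=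
  Nat.card (MulAction.orbitRel.Quotient (G.faceGroup c) G.V)

/-- The total number of faces of the graph. -/
noncomputable def F (G : TGraph) : ℕ := ∑ c : Fin 3, G.numFaces c

/-- The length of the face of color `c` through the vertex `v` (a face of
length `n` consists of `n` color-0 edges and `n` color-`c` edges, hence `2n`
vertices). -/
noncomputable def faceLength (G : TGraph) (c : Fin 3) (v : G.V) : ℕ :=
  Nat.card (MulAction.orbit (G.faceGroup c) v) / 2

/-- The subgroup generated by all edges of the graph. -/
def fullGroup (G : TGraph) : Subgroup (Equiv.Perm G.V) :=
  Subgroup.closure ({G.pairing} ∪ Set.range G.colPerm)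

/-- A graph is connected if any vertex can be reached from any other one along
its edges. -/
def Connected (G : TGraph) : Prop :=
  ∀ u v : G.V, u ∈ MulAction.orbit G.fullGroup v

/-- One step along an edge of the graph avoiding the color-0 edges whose
endpoints belong to `S`. -/
def stepAvoiding (G : TGraph) (S : Set G.V) (u v : G.V) : Prop :=
  (∃ c, v = G.colPerm c u) ∨ (v = G.pairing u ∧ u ∉ S ∧ v ∉ S)

/-- Reachability in the graph with the color-0 edges meeting `S` removed. -/
def reachAvoiding (G : TGraph) (S : Set G.V) : G.V → G.V → Prop :=
  Relation.ReflTransGen (G.stepAvoiding S)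

/-- The pair of color-0 edges through the vertices `u` and `w` disconnects the
graph when removed.  Together with the requirement that the two edges be
distinct, this is the notion of a 2-edge-cut of color-0 edges. -/
def CutDisconnects (G : TGraph) (u w : G.V) : Prop :=
  ¬ ∀ x y : G.V, G.reachAvoiding {u, G.pairing u, w, G.pairing w} x y

/-- Two vertices are connected by a 2-point function if they are joined by a
color-0 edge, or if their two (distinct) color-0 edges form a 2-edge-cut. -/
def TwoPoint (G : TGraph) (x y : G.V) : Prop :=
  G.pairing x = y ∨ (y ≠ x ∧ y ≠ G.pairing x ∧ G.CutDisconnects x y)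

/-- The flip of the two color-0 edges `{u, pairing u}` and `{w, pairing w}`
(assumed distinct) which reconnects `u` with `w` (and `pairing u` with
`pairing w`): the pairing is conjugated by the transposition exchanging
`pairing u` and `w`.  The other flip of this pair of edges is
`G.flip u (G.pairing w)`. -/
def flip (G : TGraph) (u w : G.V) : TGraph where
  B := G.B
  pairing := Equiv.swap (G.pairing u) w * G.pairing * Equiv.swap (G.pairing u) w
  invol := by
    intro v
    simp only [Equiv.Perm.mul_apply, Equiv.swap_apply_self, G.invol]
  fixfree := by
    intro v h
    simp only [Equiv.Perm.mul_apply] at h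
    have h' : G.pairing (Equiv.swap (G.pairing u) w v) = Equiv.swap (G.pairing u) w v := by
      have := congrArg (Equiv.swap (G.pairing u) w) h
      simpa using this
    exact G.fixfree _ h'

/-- The face of color `c` through the color-0 edge `{v, pairing v}` has
length 2 (it consists of this edge, a color-`c` edge, a second color-0 edge
and a second color-`c` edge closing the cycle). -/
def FaceLen2 (G : TGraph) (c : Fin 3) (v : G.V) : Prop :=
  G.pairing v ≠ G.colPerm c v ∧
    G.pairing (G.colPerm c (G.pairing v)) = G.colPerm c v

/-- A proper face of length 2 of color `c` through `v`: a face of length 2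
whose two color-0 edges connect two distinct bubbles. -/
def ProperFace2 (G : TGraph) (c : Fin 3) (v : G.V) : Prop :=
  G.FaceLen2 c v ∧ (G.pairing v).1 ≠ v.1

/-- A graph maximizes the number of faces if it is connected and no connected
graph with the same number of bubbles has more faces. -/
def MaximizesFaces (G : TGraph) : Prop :=
  G.Connected ∧ ∀ H : TGraph, H.Connected → H.b = G.b → H.F ≤ G.F

/-- Isomorphisms of graphs: bijections of the vertex sets commuting with the
color-0 pairing and with the colored matchings inside the bubbles. -/
structure Iso (G H : TGraph) where
  toEquiv : G.V ≃ H.V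
  map_pairing : ∀ v, toEquiv (G.pairing v) = H.pairing (toEquiv v)
  map_col : ∀ c v, toEquiv (G.colPerm c v) = H.colPerm c (toEquiv v)

/-- Two graphs are isomorphic. -/
def IsIso (G H : TGraph) : Prop := Nonempty (Iso G H)

end TGraph

open TGraph

/-- The leading-order two-bubble graph `G_2`: two tetrahedral bubbles with
corresponding vertices joined by four color-0 edges, so that all six faces
have length 2. -/
def G2 : TGraph where
  B := Fin 2
  pairing := (Equiv.swap (0 : Fin 2) 1).prodCongr (Equiv.refl (Fin 4))
  invol := by
    rintro ⟨i, k⟩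
    simp [Equiv.prodCongr_apply, Equiv.swap_apply_self]
  fixfree := by
    rintro ⟨i, k⟩ h
    have hi : Equiv.swap (0 : Fin 2) 1 i = i := congrArg Prod.fst h
    fin_cases i <;> simp_all

/-- The double tadpole `G_1^{(c)}`: one tetrahedral bubble whose two color-0
edges each join two vertices already adjacent by an edge of color `c`. -/
def G1 (c : Fin 3) : TGraph where
  B := Fin 1
  pairing := (Equiv.refl (Fin 1)).prodCongr (bubblePerm c)
  invol := by
    rintro ⟨i, k⟩
    have hk : ∀ j : Fin 4, bubblePerm c (bubblePerm c j) = j := by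
      fin_cases c <;> decide
    simp [Equiv.prodCongr_apply, hk]
  fixfree := by
    rintro ⟨i, k⟩ h
    have hk : bubblePerm c k = k := congrArg Prod.snd h
    have hne : ∀ j : Fin 4, bubblePerm c j ≠ j := by
      fin_cases c <;> decide
    exact hne k hk

namespace TGraph

variable (H K : TGraph)

/-- The image of a vertex of `H` in the glued graph. -/
def inlV (x : H.V) : (H.B ⊕ K.B) × Fin 4 := (Sum.inl x.1, x.2)

/-- The image of a vertex of `K` in the glued graph. -/
def inrV (y : K.V) : (H.B ⊕ K.B) × Fin 4 := (Sum.inr y.1, y.2)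

/-- The underlying function of the pairing of the graph obtained by gluing `H`
and `K` along the color-0 edges `{p, H.pairing p}` and `{q, K.pairing q}`:
these two edges are cut and the half-edges are reglued as `p — q` and
`H.pairing p — K.pairing q`.  The new pair of edges is a 2-edge-cut of the
resulting graph when `H` and `K` are connected. -/
def glueFun (p : H.V) (q : K.V) : (H.B ⊕ K.B) × Fin 4 → (H.B ⊕ K.B) × Fin 4 :=
  fun z =>
    match z with
    | (Sum.inl u, k) =>
        if (u, k) = p then inrV H K q
        else if (u, k) = H.pairing p then inrV H K (K.pairing q)
        else inlV H K (H.pairing (u, k))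
    | (Sum.inr u, k) =>
        if (u, k) = q then inlV H K p
        else if (u, k) = K.pairing q then inlV H K (H.pairing p)
        else inrV H K (K.pairing (u, k))

theorem glueFun_inlV (p : H.V) (q : K.V) (x : H.V) :
    glueFun H K p q (inlV H K x) =
      if x = p then inrV H K q
      else if x = H.pairing p then inrV H K (K.pairing q)
      else inlV H K (H.pairing x) := by
  cases x
  rfl

theorem glueFun_inrV (p : H.V) (q : K.V) (y : K.V) :
    glueFun H K p q (inrV H K y) =
      if y = q then inlV H K p
      else if y = K.pairing q then inlV H K (H.pairing p)
      else inrV H K (K.pairing y) := by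
  cases y
  rfl

theorem inlV_injective : Function.Injective (inlV H K) := by
  rintro ⟨u, k⟩ ⟨u', k'⟩ h
  have h1 : (Sum.inl u : H.B ⊕ K.B) = Sum.inl u' := congrArg Prod.fst h
  have h2 : k = k' := congrArg Prod.snd h
  exact Prod.ext (Sum.inl_injective h1) h2

theorem inrV_injective : Function.Injective (inrV H K) := by
  rintro ⟨u, k⟩ ⟨u', k'⟩ h
  have h1 : (Sum.inr u : H.B ⊕ K.B) = Sum.inr u' := congrArg Prod.fst h
  have h2 : k = k' := congrArg Prod.snd h
  exact Prod.ext (Sum.inr_injective h1) h2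

theorem inlV_ne_inrV (x : H.V) (y : K.V) : inlV H K x ≠ inrV H K y := by
  intro h
  exact Sum.inl_ne_inr (congrArg Prod.fst h)

theorem glueFun_invol_inl (p : H.V) (q : K.V) (x : H.V) :
    glueFun H K p q (glueFun H K p q (inlV H K x)) = inlV H K x := by
  rw [glueFun_inlV]
  by_cases h1 : x = p
  · rw [if_pos h1, glueFun_inrV, if_pos rfl, h1]
  · by_cases h2 : x = H.pairing p
    · rw [if_neg h1, if_pos h2, glueFun_inrV,
        if_neg (fun h => K.fixfree q h), if_pos rfl, h2]
    · have hne1 : H.pairing x ≠ p := by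
        intro h; apply h2
        have := congrArg H.pairing h
        rw [H.invol] at this; exact this
      have hne2 : H.pairing x ≠ H.pairing p := fun h => h1 (H.pairing.injective h)
      rw [if_neg h1, if_neg h2, glueFun_inlV, if_neg hne1, if_neg hne2, H.invol]

theorem glueFun_invol_inr (p : H.V) (q : K.V) (y : K.V) :
    glueFun H K p q (glueFun H K p q (inrV H K y)) = inrV H K y := by
  rw [glueFun_inrV]
  by_cases h1 : y = q
  · rw [if_pos h1, glueFun_inlV, if_pos rfl, h1]
  · by_cases h2 : y = K.pairing q
    · rw [if_neg h1, if_pos h2, glueFun_inlV,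
        if_neg (fun h => H.fixfree p h), if_pos rfl, h2]
    · have hne1 : K.pairing y ≠ q := by
        intro h; apply h2
        have := congrArg K.pairing h
        rw [K.invol] at this; exact this
      have hne2 : K.pairing y ≠ K.pairing q := fun h => h1 (K.pairing.injective h)
      rw [if_neg h1, if_neg h2, glueFun_inrV, if_neg hne1, if_neg hne2, K.invol]

theorem glueFun_involutive (p : H.V) (q : K.V) :
    Function.Involutive (glueFun H K p q) := by
  rintro ⟨(u | u), k⟩
  · exact glueFun_invol_inl H K p q (u, k)
  · exact glueFun_invol_inr H K p q (u, k)

theorem glueFun_fixfree (p : H.V) (q : K.V) :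
    ∀ z, glueFun H K p q z ≠ z := by
  have hl : ∀ x : H.V, glueFun H K p q (inlV H K x) ≠ inlV H K x := by
    intro x h
    rw [glueFun_inlV] at h
    by_cases h1 : x = p
    · rw [if_pos h1] at h
      exact inlV_ne_inrV H K x q h.symm
    · by_cases h2 : x = H.pairing p
      · rw [if_neg h1, if_pos h2] at h
        exact inlV_ne_inrV H K x (K.pairing q) h.symm
      · rw [if_neg h1, if_neg h2] at h
        exact H.fixfree x (inlV_injective H K h)
  have hr : ∀ y : K.V, glueFun H K p q (inrV H K y) ≠ inrV H K y := by
    intro y h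
    rw [glueFun_inrV] at h
    by_cases h1 : y = q
    · rw [if_pos h1] at h
      exact inlV_ne_inrV H K p y h
    · by_cases h2 : y = K.pairing q
      · rw [if_neg h1, if_pos h2] at h
        exact inlV_ne_inrV H K (H.pairing p) y h
      · rw [if_neg h1, if_neg h2] at h
        exact K.fixfree y (inrV_injective H K h)
  rintro ⟨(u | u), k⟩
  · exact hl (u, k)
  · exact hr (u, k)

/-- Gluing two graphs along a pair of color-0 edges.  When `H` and `K` are
connected, the two new color-0 edges form a 2-edge-cut of the glued graph, and
conversely every connected graph with a color-0 2-edge-cut arises this way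
from the two closed graphs obtained by cutting the two edges and closing each
side. -/
def glue (p : H.V) (q : K.V) : TGraph where
  B := H.B ⊕ K.B
  pairing := (glueFun_involutive H K p q).toPerm
  invol := fun v => glueFun_involutive H K p q v
  fixfree := fun v => glueFun_fixfree H K p q v

/-- Insertion of a melonic dipole (the 2-point graph obtained by cutting one
color-0 edge of `G_2`) on the color-0 edge `{v, G.pairing v}` of `G`. -/
def insertDipole (G : TGraph) (v : G.V) : TGraph :=
  glue G G2 v ((0 : Fin 2), (0 : Fin 4))

end TGraph

open TGraph

/-- Melonic graphs (up to isomorphism): `G_2` is melonic, and inserting a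
melonic dipole on any color-0 edge of a melonic graph yields a melonic
graph. -/
inductive IsMelonic : TGraph → Prop
  | base {G : TGraph} (h : IsIso G G2) : IsMelonic G
  | insert {G : TGraph} (hG : IsMelonic G) (v : G.V) {H : TGraph}
      (h : IsIso H (G.insertDipole v)) : IsMelonic H

/-- Double tadpoles decorated with melonic 2-point functions (up to
isomorphism): these are exactly the graphs obtained from one of the double
tadpoles `G_1^{(c)}` by repeatedly inserting melonic dipoles on color-0 edges,
i.e. double tadpoles whose two color-0 edges are replaced by melonic 2-point
functions. -/
inductive IsDecoratedTadpole : TGraph → Prop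
  | base {G : TGraph} (c : Fin 3) (h : IsIso G (G1 c)) : IsDecoratedTadpole G
  | insert {G : TGraph} (hG : IsDecoratedTadpole G) (v : G.V) {H : TGraph}
      (h : IsIso H (G.insertDipole v)) : IsDecoratedTadpole H

/-! A flip conjugates the color-0 pairing by a transposition `τ`, so adjoining `τ` to the
generators of a face group gives the same group before and after the flip.  Adjoining `τ` merges
at most two orbits into one: the numbers of faces before and after the flip both exceed the number
of orbits of this common group by `0` or `1`, and hence differ by at most one. -/

section OrbitCount

variable {G α β : Type*} [Group G] [MulAction G α]

variable (α) in
/-- The number of orbits of the subgroup `H` on `α`, with value `⊤` when it is infinite. -/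
noncomputable def orbitCount (H : Subgroup G) : ℕ∞ :=
  ENat.card (MulAction.orbitRel.Quotient H α)

/-- The orbit of a point under the subgroup `H`, as an element of the orbit space. -/
def orbitClass (H : Subgroup G) (x : α) : MulAction.orbitRel.Quotient H α :=
  Quotient.mk'' x

theorem orbitClass_surjective (H : Subgroup G) :
    Function.Surjective (orbitClass H : α → MulAction.orbitRel.Quotient H α) :=
  Quotient.mk''_surjective

theorem orbitClass_smul {H : Subgroup G} {g : G} (hg : g ∈ H) (x : α) :
    orbitClass H (g • x) = orbitClass H x :=
  MulAction.orbitRel.Quotient.quotient_smul_eq (g := (⟨g, hg⟩ : H))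

theorem apply_smul_eq_of_mem_closure {S : Set G} {f : α → β}
    (hf : ∀ g ∈ S, ∀ x, f (g • x) = f x) {g : G} (hg : g ∈ Subgroup.closure S) (x : α) :
    f (g • x) = f x := by
  induction hg using Subgroup.closure_induction generalizing x with
  | mem g hg => exact hf g hg x
  | one => rw [one_smul]
  | mul g h _ _ ihg ihh => rw [mul_smul, ihg, ihh]
  | inv g _ ih => rw [← ih, smul_inv_smul]

theorem encard_range_le_orbitCount {H : Subgroup G} {f : α → β}
    (hf : ∀ g ∈ H, ∀ x, f (g • x) = f x) : (Set.range f).encard ≤ orbitCount α H := by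
  let f' : MulAction.orbitRel.Quotient H α → β := fun y =>
    Quotient.liftOn' y f <| by
      rintro _ x ⟨g, rfl⟩
      exact hf g g.2 x
  calc (Set.range f).encard = (Set.range f').encard :=
        congrArg Set.encard ((orbitClass_surjective H).range_comp f')
    _ = (f' '' Set.univ).encard := by rw [Set.image_univ]
    _ ≤ (Set.univ : Set (MulAction.orbitRel.Quotient H α)).encard := Set.encard_image_le f' _
    _ = orbitCount α H := Set.encard_univ _

theorem orbitCount_antitone : Antitone (orbitCount α : Subgroup G → ℕ∞) := by
  intro H K hHK
  calc orbitCount α K = (Set.range (orbitClass K : α → _)).encard := by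
        rw [(orbitClass_surjective K).range_eq, Set.encard_univ, orbitCount]
    _ ≤ orbitCount α H := encard_range_le_orbitCount fun _ hg => orbitClass_smul (hHK hg)

end OrbitCount

theorem closure_insert_insert_conj {G : Type*} [Group G] (g p : G) (S : Set G) :
    Subgroup.closure (insert g (insert (g * p * g⁻¹) S)) =
      Subgroup.closure (insert g (insert p S)) := by
  refine eq_of_forall_ge_iff fun H => ?_
  simp only [Subgroup.closure_le, Set.insert_subset_iff, SetLike.mem_coe]
  refine and_congr_right fun hg => and_congr_left' ?_
  rw [H.mul_mem_cancel_right (H.inv_mem hg), H.mul_mem_cancel_left hg]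

section Swap

variable {α : Type*} [DecidableEq α]

theorem orbitCount_closure_le_insert_swap_add_one (S : Set (Perm α)) (a b : α) :
    orbitCount α (Subgroup.closure S) ≤
      orbitCount α (Subgroup.closure (insert (swap a b) S)) + 1 := by
  classical
  set H := Subgroup.closure S
  let identify := Function.update id (orbitClass H b) (orbitClass H a)
  let f : α → MulAction.orbitRel.Quotient H α := identify ∘ orbitClass H
  have f_eq : f a = f b := by simp [f, identify, Function.update_apply]
  have f_invariant : ∀ g ∈ insert (swap a b) S, ∀ x, f (g • x) = f x := by
    rintro g (rfl | hg) x
    · exact apply_swap_eq_self f_eq x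
    · exact congrArg identify (orbitClass_smul (Subgroup.subset_closure hg) x)
  have univ_subset : Set.univ ⊆ insert (orbitClass H b) (Set.range f) := by
    intro y _
    obtain ⟨x, rfl⟩ := orbitClass_surjective H y
    by_cases hx : orbitClass H x = orbitClass H b
    · exact Or.inl hx
    · exact Or.inr ⟨x, Function.update_of_ne hx _ _⟩
  calc orbitCount α H = (Set.univ : Set (MulAction.orbitRel.Quotient H α)).encard :=
        (Set.encard_univ _).symm
    _ ≤ (insert (orbitClass H b) (Set.range f)).encard := Set.encard_le_encard univ_subset
    _ ≤ (Set.range f).encard + 1 := Set.encard_insert_le _ _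
    _ ≤ orbitCount α (Subgroup.closure (insert (swap a b) S)) + 1 := by
        gcongr
        exact encard_range_le_orbitCount fun g hg => apply_smul_eq_of_mem_closure f_invariant hg

theorem orbitCount_closure_insert_conj_swap_le_add_one (a b : α) (p : Perm α) (S : Set (Perm α)) :
    orbitCount α (Subgroup.closure (insert (swap a b * p * swap a b) S)) ≤
      orbitCount α (Subgroup.closure (insert p S)) + 1 :=
  calc orbitCount α (Subgroup.closure (insert (swap a b * p * swap a b) S))
      ≤ orbitCount α (Subgroup.closure
          (insert (swap a b) (insert (swap a b * p * swap a b) S))) + 1 :=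
        orbitCount_closure_le_insert_swap_add_one _ a b
    _ = orbitCount α (Subgroup.closure (insert (swap a b) (insert p S))) + 1 := by
        rw [← closure_insert_insert_conj (swap a b) p S, swap_inv]
    _ ≤ orbitCount α (Subgroup.closure (insert p S)) + 1 := by
        gcongr
        exact orbitCount_antitone (Subgroup.closure_mono (Set.subset_insert _ _))

end Swap

namespace TGraph

theorem coe_numFaces (G : TGraph) (c : Fin 3) :
    (G.numFaces c : ℕ∞) = orbitCount G.V (Subgroup.closure {G.pairing, G.colPerm c}) :=
  (ENat.card_eq_coe_natCard _).symm

theorem coe_numFaces_flip (G : TGraph) (u w : G.V) (c : Fin 3) :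
    ((G.flip u w).numFaces c : ℕ∞) = orbitCount G.V (Subgroup.closure
      {swap (G.pairing u) w * G.pairing * swap (G.pairing u) w, G.colPerm c}) :=
  coe_numFaces (G.flip u w) c

theorem numFaces_flip_le_add_one (G : TGraph) (u w : G.V) (c : Fin 3) :
    (G.flip u w).numFaces c ≤ G.numFaces c + 1 := by
  have h := orbitCount_closure_insert_conj_swap_le_add_one (G.pairing u) w G.pairing
    {G.colPerm c}
  rw [← coe_numFaces_flip, ← coe_numFaces] at h
  exact_mod_cast h

theorem numFaces_le_numFaces_flip_add_one (G : TGraph) (u w : G.V) (c : Fin 3) :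
    G.numFaces c ≤ (G.flip u w).numFaces c + 1 := by
  set τ := swap (G.pairing u) w with hτ
  have conj_conj : τ * (τ * G.pairing * τ) * τ = G.pairing := by
    simp [hτ, mul_assoc]
  have h := orbitCount_closure_insert_conj_swap_le_add_one (G.pairing u) w
    (τ * G.pairing * τ) {G.colPerm c}
  rw [← hτ, conj_conj, ← coe_numFaces_flip, ← coe_numFaces] at h
  exact_mod_cast h

end TGraph

theorem flip_face_variation_le_one_general (G : TGraph) (u w : G.V) (c : Fin 3) :
    |((G.flip u w).numFaces c : ℤ) - (G.numFaces c : ℤ)| ≤ 1 := by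
  have hle := G.numFaces_flip_le_add_one u w c
  have hge := G.numFaces_le_numFaces_flip_add_one u w c
  rw [abs_le]
  omega

/-- If the two color-0 edges `{u, pairing u}` and
`{w, pairing w}` are distinct and do not form a 2-edge-cut, then for either of
the two flips of this pair of edges and each color `c`, the number of faces of
color `c` varies by at most one. -/
theorem flip_face_variation_le_one (G : TGraph) (u w : G.V)
    (hw1 : w ≠ u) (hw2 : w ≠ G.pairing u)
    (hcut : ¬ G.CutDisconnects u w) :
    ∀ G' ∈ ({G.flip u w, G.flip u (G.pairing w)} : Set TGraph), ∀ c : Fin 3,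
      |((G'.numFaces c : ℤ) - (G.numFaces c : ℤ))| ≤ 1 := by
  rintro G' (rfl | rfl) c <;> exact flip_face_variation_le_one_general G u _ c
end

section
/- Among connected graphs of the tetrahedral model with an even number b of bubbles, the graphs maximizing the number of faces are exactly the melonic graphs, and they satisfy F(G) = (3/2)b + 3. -/
/-!  A combinatorial model of the Feynman graphs of the rank-3 tetrahedral
(`O(N)^3`) tensor model.

A graph consists of a finite set `B` of bubbles (copies of the tetrahedron
`K_4`); each bubble has four vertices, so the vertex set is `B × Fin 4`.
Inside every bubble the edges of colors `1,2,3` are given once and for all by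
the three fixed-point-free involutions of `Fin 4` (the proper 3-edge-coloring
of `K_4`).  The color-0 propagator edges, one per vertex, are encoded by a
fixed-point-free involution `pairing` of the vertex set. -/

open Equiv

open TGraph

open TGraph

/-! The faces of color `c` are counted by the dimension of the space of functions on the vertices,
with values in the field with two elements, which are invariant along the edges of colors `0` and
`c`. Invariance under one perfect matching cuts out an isotropic subspace for the dot product, so
counting dimensions gives `numFaces a + numFaces b ≤ b + 2` for a connected graph and two colors,
hence `2 F ≤ 3 b + 6`.

In the case of equality these isotropic inclusions are equalities, and the duality they express
provides two things. First, a sign alternating along the color-0 edges of each face, so that all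
faces have even length and, by counting, one has length 2. Second, a splitting of the indicator
function of such a face: it shows that removing the two bubbles of the face leaves two
disjoint regions, each attached by a cut of two color-0 edges unless it is empty. Gluing two
graphs along a color-0 edge adds their numbers of faces up to a loss of 3, so both sides of such a
cut are again extremal, and induction produces a melonic dipole avoiding any given color-0 edge.
Removing a dipole yields a smaller extremal graph, so extremal graphs are melonic. Conversely,
inserting a dipole preserves equality in the bound. -/

open Module

/-! ### Functions invariant under permutations -/

section PermInvariants

variable {X : Type*}

theorem apply_smul_of_mem_closure {R : Type*} {S : Set (Perm X)} {f : X → R}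
    (hf : ∀ α ∈ S, ∀ x, f (α x) = f x) (γ : Subgroup.closure S) (x : X) : f (γ • x) = f x := by
  obtain ⟨γ, hγ⟩ := γ
  change f (γ x) = f x
  induction hγ using Subgroup.closure_induction generalizing x with
  | mem α hα => exact hf α hα x
  | one => rfl
  | mul α β _ _ hα hβ => rw [Perm.mul_apply, hα, hβ]
  | inv α _ hα => rw [← hα, ← Perm.mul_apply, mul_inv_cancel, Perm.one_apply]

theorem mem_orbit_closure_iff (R : Type*) [Nontrivial R] {S : Set (Perm X)} {x y : X} :
    x ∈ MulAction.orbit (Subgroup.closure S) y ↔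
      ∀ f : X → R, (∀ α ∈ S, ∀ z, f (α z) = f z) → f x = f y := by
  classical
  refine ⟨fun ⟨γ, hγ⟩ f hf => hγ ▸ apply_smul_of_mem_closure hf γ y, fun h => ?_⟩
  obtain ⟨r, s, hrs⟩ := exists_pair_ne R
  have horbit : ∀ α ∈ S, ∀ z, MulAction.orbit (Subgroup.closure S) (α z) =
      MulAction.orbit (Subgroup.closure S) z := fun α hα z =>
    MulAction.orbit_smul (⟨α, Subgroup.subset_closure hα⟩ : Subgroup.closure S) z
  have hxy := h (fun z => if MulAction.orbit (Subgroup.closure S) z =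
    MulAction.orbit (Subgroup.closure S) y then r else s) fun α hα z => by simp only [horbit α hα z]
  by_contra hx
  rw [← MulAction.orbit_eq_iff] at hx
  simp only [hx, if_true, if_false] at hxy
  exact hrs hxy.symm

/-- The functions `X → K` which are invariant under the permutation `α`. -/
def permInvariants (K : Type*) [Semiring K] (α : Perm X) : Submodule K (X → K) where
  carrier := {f | ∀ x, f (α x) = f x}
  add_mem' hf hg x := congrArg₂ (· + ·) (hf x) (hg x)
  zero_mem' _ := rfl
  smul_mem' r _ hf x := congrArg (r * ·) (hf x)

theorem card_orbits_closure_eq_finrank [Finite X] (K : Type*) [Field K] (S : Set (Perm X)) :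
    Nat.card (MulAction.orbitRel.Quotient (Subgroup.closure S) X) =
      finrank K ↥(⨅ α ∈ S, permInvariants K α) := by
  let Q := MulAction.orbitRel.Quotient (Subgroup.closure S) X
  let mk : X → Q := Quotient.mk''
  have : Fintype Q := Fintype.ofFinite Q
  have hinj : Function.Injective (LinearMap.funLeft K K mk) :=
    LinearMap.funLeft_injective_of_surjective _ _ _ Quotient.mk''_surjective
  have hrange : LinearMap.range (LinearMap.funLeft K K mk) = ⨅ α ∈ S, permInvariants K α := by
    ext f
    simp only [Submodule.mem_iInf]
    refine ⟨?_, fun hf => ⟨Quotient.lift f ?_, rfl⟩⟩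
    · rintro ⟨g, rfl⟩ α hα x
      exact congrArg g (Quotient.sound ⟨⟨α, Subgroup.subset_closure hα⟩, rfl⟩)
    · rintro x y ⟨γ, rfl⟩
      exact apply_smul_of_mem_closure hf γ y
  rw [← hrange, LinearMap.finrank_range_of_inj hinj, finrank_fintype_fun_eq_card,
    Nat.card_eq_fintype_card]

theorem exists_card_orbit_lt {Γ : Type*} [Group Γ] [MulAction Γ X] [Finite X] {n : ℕ}
    (h : Nat.card X < Nat.card (MulAction.orbitRel.Quotient Γ X) * n) :
    ∃ x : X, Nat.card (MulAction.orbit Γ x) < n := by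
  classical
  have := Fintype.ofFinite X
  have := Fintype.ofFinite (MulAction.orbitRel.Quotient Γ X)
  rw [Nat.card_eq_fintype_card, Nat.card_eq_fintype_card] at h
  obtain ⟨q, hq⟩ := Fintype.exists_card_fiber_lt_of_card_lt_mul
    (Quotient.mk'' : X → MulAction.orbitRel.Quotient Γ X) h
  obtain ⟨x, rfl⟩ := Quotient.mk''_surjective q
  refine ⟨x, ?_⟩
  rwa [Nat.card_eq_card_toFinset, show (MulAction.orbit Γ x).toFinset = _ from ?_]
  ext y
  simp [Quotient.eq'', MulAction.orbitRel_apply]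

end PermInvariants

section Involution

variable {X : Type*} [Fintype X] {K : Type*} {α : Perm X}

section CommSemiring

variable [CommSemiring K]

theorem dotProductBilin_isRefl :
    (dotProductBilin K K : LinearMap.BilinForm K (X → K)).IsRefl := fun f g h =>
  (dotProduct_comm g f).trans h

theorem dotProductBilin_nondegenerate :
    (dotProductBilin K K : LinearMap.BilinForm K (X → K)).Nondegenerate :=
  ⟨dotProduct_eq_zero, fun f h => dotProduct_eq_zero f fun g => (dotProduct_comm f g).trans (h g)⟩

theorem permInvariants_le_orthogonal [CharP K 2] (hα : Function.Involutive α)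
    (hfix : ∀ x, α x ≠ x) :
    permInvariants K α ≤
      LinearMap.BilinForm.orthogonal (dotProductBilin K K) (permInvariants K α) := fun g hg f hf =>
  Finset.sum_involution (fun x _ => α x)
    (fun x _ => by rw [hf x, hg x, CharTwo.add_self_eq_zero]) (fun x _ _ => hfix x)
    (fun x _ => Finset.mem_univ _) fun x _ => hα x

end CommSemiring

theorem card_le_two_mul_finrank_permInvariants [Field K] [CharP K 2]
    (hα : Function.Involutive α) :
    Fintype.card X ≤ 2 * finrank K (permInvariants K α) := by
  let L : (X → K) →ₗ[K] X → K := LinearMap.id + LinearMap.funLeft K K α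
  have hL (f x) : L f x = f x + f (α x) := rfl
  have hrange : LinearMap.range L ≤ permInvariants K α := by
    rintro _ ⟨f, rfl⟩ x
    rw [hL, hL, hα, add_comm]
  have hker : LinearMap.ker L ≤ permInvariants K α := fun f hf x =>
    (CharTwo.add_eq_zero.1 (congrFun hf x)).symm
  have hadd := L.finrank_range_add_finrank_ker
  rw [finrank_fintype_fun_eq_card] at hadd
  linarith [Submodule.finrank_mono hrange, Submodule.finrank_mono hker]

end Involution

section Flipped

variable {X : Type*} {α β : Perm X}

theorem exists_flipped (hα : Function.Involutive α) (hfix : ∀ x, α x ≠ x) :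
    ∃ t : X → ZMod 2, ∀ x, t (α x) = t x + 1 := by
  classical
  let _ := linearOrderOfSTO (WellOrderingRel (α := X))
  refine ⟨fun x => if x < α x then 1 else 0, fun x => ?_⟩
  simp only [hα x]
  rcases (hfix x).lt_or_gt with h | h <;> simp only [h, h.not_gt, if_true, if_false] <;> decide

theorem two_mul_card_filter_flipped (hα : Function.Involutive α) {s : X → ZMod 2}
    (hs : ∀ x, s (α x) = s x + 1) (z : ZMod 2) {O : Finset X} (hO : ∀ x ∈ O, α x ∈ O) :
    2 * (O.filter fun x => s x = z).card = O.card := by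
  have hflip : ∀ y z : ZMod 2, y + 1 = z ↔ ¬ y = z := by decide
  have hcard : (O.filter fun x => s x = z).card = (O.filter fun x => ¬ s x = z).card := by
    refine Finset.card_nbij' α α ?_ ?_ (fun x _ => hα x) fun x _ => hα x
    all_goals
      intro x hx
      rw [SetLike.mem_coe, Finset.mem_filter, hs, hflip] at *
      exact ⟨hO x hx.1, by simpa using hx.2⟩
  have := Finset.card_filter_add_card_filter_not (s := O) fun x => s x = z
  omega

theorem dotProduct_eq_dotProduct_of_flipped [Fintype X] (hα : Function.Involutive α)
    (hβ : Function.Involutive β) {f s t : X → ZMod 2} (hfα : ∀ x, f (α x) = f x)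
    (hfβ : ∀ x, f (β x) = f x) (hs : ∀ x, s (α x) = s x + 1) (ht : ∀ x, t (β x) = t x + 1) :
    f ⬝ᵥ s = f ⬝ᵥ t := by
  let O : Finset X := Finset.univ.filter fun x => f x = 1
  have hdot (r : X → ZMod 2) : f ⬝ᵥ r = (O.filter fun x => r x = 1).card := by
    have hmul : ∀ z w : ZMod 2, z * w = if z = 1 ∧ w = 1 then 1 else 0 := by decide
    rw [Finset.filter_filter, ← Finset.sum_boole]
    exact Finset.sum_congr rfl fun x _ => hmul _ _
  have hsO := two_mul_card_filter_flipped hα hs 1 (O := O) (by simp [O, hfα])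
  have htO := two_mul_card_filter_flipped hβ ht 1 (O := O) (by simp [O, hfβ])
  rw [hdot, hdot, mul_left_cancel₀ two_ne_zero (hsO.trans htO.symm)]

theorem apply_apply_apply_of_card_lt_eight (hα : Function.Involutive α)
    (hβ : Function.Involutive β) (hβfix : ∀ x, β x ≠ x) {s : X → ZMod 2}
    (hsα : ∀ x, s (α x) = s x + 1) (hsβ : ∀ x, s (β x) = s x) {O : Finset X}
    (hOα : ∀ x ∈ O, α x ∈ O) (hOβ : ∀ x ∈ O, β x ∈ O) (hO : O.card < 8) {x : X} (hx : x ∈ O) :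
    α (β (α x)) = β x := by
  classical
  obtain ⟨t, ht⟩ := exists_flipped hβ hβfix
  let A := O.filter fun y => s y = s x
  have hA : 2 * A.card = O.card := two_mul_card_filter_flipped hα hsα (s x) hOα
  have heven : 2 * (A.filter fun y => t y = 0).card = A.card :=
    two_mul_card_filter_flipped hβ ht 0 fun y hy => by
      rw [Finset.mem_filter] at hy ⊢
      exact ⟨hOβ y hy.1, (hsβ y).trans hy.2⟩
  by_contra hne
  have hsub : {x, β x, α (β (α x))} ⊆ A := by
    simp [Finset.insert_subset_iff, A, hx, hOα _ (hOβ _ (hOα x hx)), hOβ, hsα, hsβ, add_assoc,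
      CharTwo.add_self_eq_zero]
  have hcard : ({x, β x, α (β (α x))} : Finset X).card = 3 :=
    Finset.card_eq_three.2 ⟨_, _, _, (hβfix x).symm,
      fun h => hβfix (α x) (α.injective (h.symm.trans (hα x).symm)), Ne.symm hne, rfl⟩
  have := Finset.card_le_card hsub
  omega

end Flipped

/-! ### Isotropic subspaces -/

section Isotropic

variable {K V : Type*} [Field K] [AddCommGroup V] [Module K V]

theorem inf_le_orthogonal_sup {B : LinearMap.BilinForm K V} {U T W : Submodule K V}
    (hU : U ≤ B.orthogonal U) (hT : T ≤ B.orthogonal T) (hW : W ≤ T) :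
    U ⊓ T ≤ B.orthogonal (U ⊔ W) := by
  rintro v ⟨hvU, hvT⟩ x hx
  obtain ⟨u, hu, w, hw, rfl⟩ := Submodule.mem_sup.1 hx
  exact (LinearMap.map_add₂ B u w v).trans
    ((congrArg₂ (· + ·) (hU hvU u hu) (hT hvT w (hW hw))).trans (add_zero 0))

variable [FiniteDimensional K V]

theorem finrank_inf_sup_inf_add_finrank_sup_inf (U₁ U₂ U₃ : Submodule K V) :
    finrank K ↥(U₁ ⊓ U₂ ⊔ U₁ ⊓ U₃) + finrank K ↥(U₁ ⊔ U₂ ⊓ U₃) +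
        2 * finrank K ↥(U₁ ⊓ U₂ ⊓ U₃) =
      finrank K ↥(U₁ ⊓ U₂) + finrank K ↥(U₁ ⊓ U₃) + finrank K U₁ + finrank K ↥(U₂ ⊓ U₃) := by
  have h₁ := Submodule.finrank_sup_add_finrank_inf_eq (U₁ ⊓ U₂) (U₁ ⊓ U₃)
  have h₂ := Submodule.finrank_sup_add_finrank_inf_eq U₁ (U₂ ⊓ U₃)
  rw [← inf_inf_distrib_left, ← inf_assoc] at h₁
  rw [← inf_assoc] at h₂
  omega

variable {B : LinearMap.BilinForm K V} {U₁ U₂ U₃ : Submodule K V}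

theorem finrank_inf_add_finrank_inf_le_of_isotropic (hB : B.Nondegenerate)
    (h₁ : U₁ ≤ B.orthogonal U₁) (h₂ : U₂ ≤ B.orthogonal U₂) (h₃ : U₃ ≤ B.orthogonal U₃) :
    finrank K ↥(U₁ ⊓ U₂) + finrank K ↥(U₁ ⊓ U₃) + finrank K U₁ + finrank K ↥(U₂ ⊓ U₃) ≤
      finrank K V + 2 * finrank K ↥(U₁ ⊓ U₂ ⊓ U₃) := by
  have hle := Submodule.finrank_mono (sup_le (inf_le_orthogonal_sup h₁ h₂ inf_le_left)
    (inf_le_orthogonal_sup h₁ h₃ inf_le_right))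
  have hdim := finrank_inf_sup_inf_add_finrank_sup_inf U₁ U₂ U₃
  rw [LinearMap.BilinForm.finrank_orthogonal hB] at hle
  have := (U₁ ⊔ U₂ ⊓ U₃).finrank_le
  omega

theorem orthogonal_sup_inf_of_isotropic (hB : B.Nondegenerate)
    (h₁ : U₁ ≤ B.orthogonal U₁) (h₂ : U₂ ≤ B.orthogonal U₂) (h₃ : U₃ ≤ B.orthogonal U₃)
    (hdim : finrank K V + 2 * finrank K ↥(U₁ ⊓ U₂ ⊓ U₃) ≤
      finrank K ↥(U₁ ⊓ U₂) + finrank K ↥(U₁ ⊓ U₃) + finrank K U₁ + finrank K ↥(U₂ ⊓ U₃)) :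
    B.orthogonal (U₁ ⊔ U₂ ⊓ U₃) = U₁ ⊓ U₂ ⊔ U₁ ⊓ U₃ := by
  refine (Submodule.eq_of_le_of_finrank_le (sup_le (inf_le_orthogonal_sup h₁ h₂ inf_le_left)
    (inf_le_orthogonal_sup h₁ h₃ inf_le_right)) ?_).symm
  rw [LinearMap.BilinForm.finrank_orthogonal hB]
  have := finrank_inf_sup_inf_add_finrank_sup_inf U₁ U₂ U₃
  omega

end Isotropic

/-! ### The face bound and its equality case -/

section BubblePerm

theorem bubblePerm_involutive : ∀ c, Function.Involutive (bubblePerm c) := by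
  unfold Function.Involutive
  decide

theorem bubblePerm_ne : ∀ c k, bubblePerm c k ≠ k := by decide

theorem bubblePerm_ne_bubblePerm : ∀ a b, a ≠ b → ∀ k, bubblePerm a k ≠ bubblePerm b k := by
  decide

theorem bubblePerm_bubblePerm :
    ∀ a b c, a ≠ b → a ≠ c → b ≠ c → ∀ k, bubblePerm a (bubblePerm b k) = bubblePerm c k := by
  decide

theorem eq_or_exists_eq_bubblePerm : ∀ k l, k = l ∨ ∃ c, k = bubblePerm c l := by decide

theorem color_eq_or_eq_or_eq :
    ∀ a b c : Fin 3, a ≠ b → a ≠ c → b ≠ c → ∀ d, d = a ∨ d = b ∨ d = c := by decide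

theorem exists_third_color : ∀ a b : Fin 3, a ≠ b → ∃ c, a ≠ c ∧ b ≠ c := by decide

theorem exists_other_colors : ∀ c : Fin 3, ∃ a b, a ≠ b ∧ a ≠ c ∧ b ≠ c := by decide

theorem exists_flipped_bubblePerm : ∀ a b, a ≠ b → ∃ s : Fin 4 → ZMod 2,
    (∀ k, s (bubblePerm a k) = s k + 1) ∧ ∀ k, s (bubblePerm b k) = s k + 1 := by
  decide

end BubblePerm

namespace TGraph

section Basic

variable {G : TGraph} {a b c : Fin 3} {u v : G.V}

theorem colPerm_involutive (c : Fin 3) : Function.Involutive (G.colPerm c) := fun v =>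
  Prod.ext rfl (bubblePerm_involutive c v.2)

theorem colPerm_ne (c : Fin 3) (v : G.V) : G.colPerm c v ≠ v := fun h =>
  bubblePerm_ne c v.2 (congrArg Prod.snd h)

theorem colPerm_ne_colPerm (hab : a ≠ b) (v : G.V) : G.colPerm a v ≠ G.colPerm b v := fun h =>
  bubblePerm_ne_bubblePerm a b hab v.2 (congrArg Prod.snd h)

theorem colPerm_colPerm (hab : a ≠ b) (hac : a ≠ c) (hbc : b ≠ c) (v : G.V) :
    G.colPerm a (G.colPerm b v) = G.colPerm c v :=
  Prod.ext rfl (bubblePerm_bubblePerm a b c hab hac hbc v.2)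

theorem eq_or_exists_eq_colPerm (h : u.1 = v.1) : u = v ∨ ∃ c, u = G.colPerm c v :=
  (eq_or_exists_eq_bubblePerm u.2 v.2).imp (Prod.ext h) (Exists.imp fun _ => Prod.ext h)

theorem eq_or_eq_colPerm_or (hab : a ≠ b) (hac : a ≠ c) (hbc : b ≠ c) (h : u.1 = v.1) :
    u = v ∨ u = G.colPerm a v ∨ u = G.colPerm b v ∨ u = G.colPerm c v := by
  obtain rfl | ⟨d, rfl⟩ := eq_or_exists_eq_colPerm h
  · exact Or.inl rfl
  · obtain rfl | rfl | rfl := color_eq_or_eq_or_eq a b c hab hac hbc d <;> simp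

theorem card_V : Fintype.card G.V = 4 * G.b := by
  rw [Fintype.card_prod, Fintype.card_fin, mul_comm, TGraph.b]

theorem F_eq : G.F = G.numFaces 0 + G.numFaces 1 + G.numFaces 2 := Fin.sum_univ_three _

theorem apply_colPerm_of_ne {R : Type*} {f : G.V → R} (hab : a ≠ b)
    (ha : ∀ x, f (G.colPerm a x) = f x) (hb : ∀ x, f (G.colPerm b x) = f x) (c : Fin 3)
    (x : G.V) : f (G.colPerm c x) = f x := by
  obtain ⟨d, had, hbd⟩ := exists_third_color a b hab
  obtain rfl | rfl | rfl := color_eq_or_eq_or_eq a b d hab had hbd c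
  · exact ha x
  · exact hb x
  · rw [← colPerm_colPerm hab had hbd, ha, hb]

theorem apply_eq_of_fst_eq {R : Type*} {f : G.V → R}
    (hf : ∀ c x, f (G.colPerm c x) = f x) (h : u.1 = v.1) : f u = f v := by
  obtain rfl | ⟨c, rfl⟩ := eq_or_exists_eq_colPerm h
  · rfl
  · exact hf c v

theorem connected_iff (R : Type*) [Nontrivial R] :
    G.Connected ↔ ∀ f : G.V → R, (∀ x, f (G.pairing x) = f x) →
      (∀ c x, f (G.colPerm c x) = f x) → ∀ u v, f u = f v := by
  have horbit (u v : G.V) : u ∈ MulAction.orbit G.fullGroup v ↔ ∀ f : G.V → R,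
      (∀ x, f (G.pairing x) = f x) ∧ (∀ c x, f (G.colPerm c x) = f x) → f u = f v :=
    (mem_orbit_closure_iff R).trans <| by
      simp only [Set.singleton_union, Set.forall_mem_insert, Set.forall_mem_range]
  exact ⟨fun h f hp hc u v => (horbit u v).1 (h u v) f ⟨hp, hc⟩,
    fun h u v => (horbit u v).2 fun f hf => h f hf.1 hf.2 u v⟩

end Basic

section FaceBound

variable (G : TGraph)

/-- The functions on the vertices, with values in the field with two elements, which are
invariant along the color-0 edges. -/
abbrev pairingInvariants : Submodule (ZMod 2) (G.V → ZMod 2) := permInvariants (ZMod 2) G.pairing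

/-- The functions on the vertices, with values in the field with two elements, which are
invariant along the color-`c` edges. -/
abbrev colInvariants (c : Fin 3) : Submodule (ZMod 2) (G.V → ZMod 2) :=
  permInvariants (ZMod 2) (G.colPerm c)

/-- The standard symmetric bilinear form on the functions on the vertices with values in the
field with two elements. -/
abbrev vertexForm : LinearMap.BilinForm (ZMod 2) (G.V → ZMod 2) :=
  dotProductBilin (ZMod 2) (ZMod 2)

theorem numFaces_eq_finrank (c : Fin 3) :
    G.numFaces c = finrank (ZMod 2) ↥(G.pairingInvariants ⊓ G.colInvariants c) :=
  (card_orbits_closure_eq_finrank (ZMod 2) _).trans (by rw [iInf_pair])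

theorem pairingInvariants_isotropic :
    G.pairingInvariants ≤ G.vertexForm.orthogonal G.pairingInvariants :=
  permInvariants_le_orthogonal G.invol G.fixfree

theorem colInvariants_isotropic (c : Fin 3) :
    G.colInvariants c ≤ G.vertexForm.orthogonal (G.colInvariants c) :=
  permInvariants_le_orthogonal (colPerm_involutive c) (colPerm_ne c)

theorem two_mul_b_le_finrank_pairingInvariants :
    2 * G.b ≤ finrank (ZMod 2) G.pairingInvariants := by
  have h : _ ≤ 2 * finrank (ZMod 2) G.pairingInvariants :=
    card_le_two_mul_finrank_permInvariants G.invol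
  rw [card_V] at h
  omega

theorem b_le_finrank_colInvariants_inf (a b : Fin 3) :
    G.b ≤ finrank (ZMod 2) ↥(G.colInvariants a ⊓ G.colInvariants b) := by
  let L := LinearMap.funLeft (ZMod 2) (ZMod 2) (Prod.fst : G.V → G.B)
  have hinj : Function.Injective L :=
    LinearMap.funLeft_injective_of_surjective _ _ _ Prod.fst_surjective
  have hrange : LinearMap.range L ≤ G.colInvariants a ⊓ G.colInvariants b := by
    rintro _ ⟨f, rfl⟩
    exact ⟨fun _ => rfl, fun _ => rfl⟩
  have h := Submodule.finrank_mono hrange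
  rwa [LinearMap.finrank_range_of_inj hinj, finrank_fintype_fun_eq_card] at h

variable {G} {a b c : Fin 3}

theorem Connected.finrank_inf_inf_le_one (hG : G.Connected) (hab : a ≠ b) :
    finrank (ZMod 2) ↥(G.pairingInvariants ⊓ G.colInvariants a ⊓ G.colInvariants b) ≤ 1 := by
  have hle : G.pairingInvariants ⊓ G.colInvariants a ⊓ G.colInvariants b ≤
      Submodule.span (ZMod 2) {1} := by
    rintro f ⟨⟨hp, ha⟩, hb⟩
    have hconst := (connected_iff (ZMod 2)).1 hG f hp (apply_colPerm_of_ne hab ha hb)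
    rcases isEmpty_or_nonempty G.V with hV | ⟨⟨v⟩⟩
    · rw [Subsingleton.elim f 0]
      exact Submodule.zero_mem _
    · exact Submodule.mem_span_singleton.2 ⟨f v, funext fun u => by simp [hconst u v]⟩
  exact (Submodule.finrank_mono hle).trans ((finrank_span_le_card _).trans (by simp))

theorem Connected.numFaces_add_numFaces_le (hG : G.Connected) (hab : a ≠ b) :
    G.numFaces a + G.numFaces b ≤ G.b + 2 := by
  have h := finrank_inf_add_finrank_inf_le_of_isotropic dotProductBilin_nondegenerate
    G.pairingInvariants_isotropic (G.colInvariants_isotropic a) (G.colInvariants_isotropic b)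
  have hconst := hG.finrank_inf_inf_le_one hab
  have hpairing := G.two_mul_b_le_finrank_pairingInvariants
  have hcol := G.b_le_finrank_colInvariants_inf a b
  rw [finrank_fintype_fun_eq_card, card_V] at h
  rw [numFaces_eq_finrank, numFaces_eq_finrank]
  omega

theorem Connected.two_mul_F_le (hG : G.Connected) : 2 * G.F ≤ 3 * G.b + 6 := by
  have h₀₁ := hG.numFaces_add_numFaces_le (a := 0) (b := 1) (by decide)
  have h₀₂ := hG.numFaces_add_numFaces_le (a := 0) (b := 2) (by decide)
  have h₁₂ := hG.numFaces_add_numFaces_le (a := 1) (b := 2) (by decide)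
  rw [F_eq]
  omega

end FaceBound

section Extremal

/-- A graph is extremal if it is connected and attains the bound `F(G) ≤ (3/2) b + 3` valid for
all connected graphs. -/
def IsExtremal (G : TGraph) : Prop := G.Connected ∧ 2 * G.F = 3 * G.b + 6

variable {G : TGraph} {a b c : Fin 3}

theorem IsExtremal.numFaces_add_numFaces (hG : G.IsExtremal) (hab : a ≠ b) :
    G.numFaces a + G.numFaces b = G.b + 2 := by
  have h₀₁ := hG.1.numFaces_add_numFaces_le (a := 0) (b := 1) (by decide)
  have h₀₂ := hG.1.numFaces_add_numFaces_le (a := 0) (b := 2) (by decide)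
  have h₁₂ := hG.1.numFaces_add_numFaces_le (a := 1) (b := 2) (by decide)
  have hF := hG.2
  rw [F_eq] at hF
  fin_cases a <;> fin_cases b <;> simp only [ne_eq, not_true_eq_false] at hab <;>
    simp only [Fin.zero_eta, Fin.mk_one, Fin.reduceFinMk] <;> omega

theorem IsExtremal.orthogonal_sup_inf (hG : G.IsExtremal) (hab : a ≠ b) :
    G.vertexForm.orthogonal (G.pairingInvariants ⊔ G.colInvariants a ⊓ G.colInvariants b) =
      G.pairingInvariants ⊓ G.colInvariants a ⊔ G.pairingInvariants ⊓ G.colInvariants b := by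
  refine orthogonal_sup_inf_of_isotropic dotProductBilin_nondegenerate
    G.pairingInvariants_isotropic (G.colInvariants_isotropic a) (G.colInvariants_isotropic b) ?_
  have h := hG.numFaces_add_numFaces hab
  have hconst := hG.1.finrank_inf_inf_le_one hab
  have hpairing := G.two_mul_b_le_finrank_pairingInvariants
  have hcol := G.b_le_finrank_colInvariants_inf a b
  rw [numFaces_eq_finrank, numFaces_eq_finrank] at h
  rw [finrank_fintype_fun_eq_card, card_V]
  omega

theorem IsExtremal.orthogonal_inf_sup_inf (hG : G.IsExtremal) (hab : a ≠ b) :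
    G.vertexForm.orthogonal
        (G.pairingInvariants ⊓ G.colInvariants a ⊔ G.pairingInvariants ⊓ G.colInvariants b) =
      G.pairingInvariants ⊔ G.colInvariants a ⊓ G.colInvariants b := by
  rw [← hG.orthogonal_sup_inf hab, LinearMap.BilinForm.orthogonal_orthogonal (B := G.vertexForm)
    dotProductBilin_nondegenerate dotProductBilin_isRefl]

theorem IsExtremal.inf_le_sup (hG : G.IsExtremal) (hab : a ≠ b) (c : Fin 3) :
    G.pairingInvariants ⊓ G.colInvariants c ≤
      G.pairingInvariants ⊓ G.colInvariants a ⊔ G.pairingInvariants ⊓ G.colInvariants b := by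
  rw [← hG.orthogonal_sup_inf hab]
  exact inf_le_orthogonal_sup G.pairingInvariants_isotropic (G.colInvariants_isotropic c)
    fun f hf => apply_colPerm_of_ne hab hf.1 hf.2 c

theorem dotProduct_add_eq_zero_of_flipped {s t f : G.V → ZMod 2}
    (hs : ∀ v, s (G.colPerm c v) = s v + 1) (ht : ∀ v, t (G.pairing v) = t v + 1)
    (hf : f ∈ G.pairingInvariants ⊓ G.colInvariants c) : f ⬝ᵥ (s + t) = 0 := by
  rw [dotProduct_add, CharTwo.add_eq_zero,
    dotProduct_eq_dotProduct_of_flipped (colPerm_involutive c) G.invol hf.2 hf.1 hs ht]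

-- Since `σ` alternates along the color-0 edges of a face of color `c`, the face has even length.
theorem IsExtremal.exists_faceSign (hG : G.IsExtremal) (c : Fin 3) :
    ∃ σ : G.V → ZMod 2, (∀ v, σ (G.pairing v) = σ v + 1) ∧ ∀ v, σ (G.colPerm c v) = σ v := by
  obtain ⟨a, b, hab, hac, hbc⟩ := exists_other_colors c
  obtain ⟨s, hsa, hsb⟩ := exists_flipped_bubblePerm a b hab
  obtain ⟨t, ht⟩ := exists_flipped G.invol G.fixfree
  have hmem : (s ∘ Prod.snd) + t ∈ G.pairingInvariants ⊔ G.colInvariants a ⊓ G.colInvariants b := by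
    rw [← hG.orthogonal_inf_sup_inf hab]
    intro f hf
    obtain ⟨g, hg, h, hh, rfl⟩ := Submodule.mem_sup.1 hf
    exact (add_dotProduct g h _).trans ((congrArg₂ (· + ·)
      (dotProduct_add_eq_zero_of_flipped (fun v => hsa v.2) ht hg)
      (dotProduct_add_eq_zero_of_flipped (fun v => hsb v.2) ht hh)).trans (add_zero 0))
  obtain ⟨u, hu, f, ⟨hfa, hfb⟩, huf⟩ := Submodule.mem_sup.1 hmem
  have hσ (v : G.V) : t v + u v = s v.2 + f v := by
    have h : u v + f v = s v.2 + t v := congrFun huf v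
    grind
  refine ⟨fun v => t v + u v, fun v => by grind [hu v, ht v], fun v => ?_⟩
  have ha (v : G.V) : s (G.colPerm a v).2 = s v.2 + 1 := hsa v.2
  have hb (v : G.V) : s (G.colPerm b v).2 = s v.2 + 1 := hsb v.2
  simp only [hσ, ← colPerm_colPerm hab hac hbc, ha, hb, hfa _, hfb _]
  grind

end Extremal

/-- The color-`c` edge at `v` and the color-`c` edge at the other end of the color-0 edge through
`v` are joined by two color-0 edges. Up to the condition that the color-0 edge through `v` is not
parallel to the color-`c` edge, this is `FaceLen2`. -/
def IsParallel (G : TGraph) (c : Fin 3) (v : G.V) : Prop :=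
  G.pairing (G.colPerm c v) = G.colPerm c (G.pairing v)

section ShortFaces

variable {G : TGraph} {c : Fin 3} {v : G.V}

theorem IsExtremal.pairing_ne_colPerm (hG : G.IsExtremal) (c : Fin 3) (v : G.V) :
    G.pairing v ≠ G.colPerm c v := by
  intro h
  obtain ⟨σ, hp, hc⟩ := hG.exists_faceSign c
  have h₁ := hp v
  rw [h, hc v] at h₁
  exact one_ne_zero (left_eq_add.1 h₁)

theorem IsExtremal.pairing_fst_ne (hG : G.IsExtremal) (v : G.V) : (G.pairing v).1 ≠ v.1 := by
  intro h
  obtain hv | ⟨c, hc⟩ := eq_or_exists_eq_colPerm h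
  exacts [G.fixfree v hv, hG.pairing_ne_colPerm c v hc]

theorem FaceLen2.isParallel (h : G.FaceLen2 c v) : G.IsParallel c v := by
  rw [IsParallel, ← h.2, G.invol]

theorem IsParallel.pairing (h : G.IsParallel c v) : G.IsParallel c (G.pairing v) := by
  rw [IsParallel, ← h, G.invol, G.invol]

theorem IsExtremal.exists_faceLen2 (hG : G.IsExtremal) : ∃ c v, G.FaceLen2 c v := by
  obtain ⟨c, hc⟩ : ∃ c, Nat.card G.V < G.numFaces c * 8 := by
    by_contra! h
    have hF := hG.2
    rw [F_eq] at hF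
    have h₀ := h 0
    have h₁ := h 1
    have h₂ := h 2
    rw [Nat.card_eq_fintype_card, card_V] at h₀ h₁ h₂
    omega
  obtain ⟨v, hv⟩ := exists_card_orbit_lt hc
  obtain ⟨σ, hp, hσ⟩ := hG.exists_faceSign c
  classical
  let O := (MulAction.orbit (G.faceGroup c) v).toFinset
  have hO (α : Perm G.V) (hα : α ∈ G.faceGroup c) (y : G.V) (hy : y ∈ O) : α y ∈ O := by
    rw [Set.mem_toFinset] at hy ⊢
    exact MulAction.mem_orbit_of_mem_orbit (⟨α, hα⟩ : G.faceGroup c) hy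
  have hOp := hO G.pairing (Subgroup.subset_closure (by simp))
  have hOc := hO (G.colPerm c) (Subgroup.subset_closure (by simp))
  rw [Nat.card_eq_card_toFinset] at hv
  exact ⟨c, v, hG.pairing_ne_colPerm c v,
    apply_apply_apply_of_card_lt_eight G.invol (colPerm_involutive c) (colPerm_ne c) hp hσ
      hOp hOc hv (Set.mem_toFinset.2 (MulAction.mem_orbit_self v))⟩

end ShortFaces

/-! ### Cuts at a face of length 2 -/

/-- The set `S` of bubbles is joined to its complement by exactly the two color-0 edges through
the vertices `u` and `w` of `S`. -/
structure IsCut (G : TGraph) (S : Set G.B) (u w : G.V) : Prop where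
  left_mem : u.1 ∈ S
  right_mem : w.1 ∈ S
  ne : u ≠ w
  pairing_left_notMem : (G.pairing u).1 ∉ S
  pairing_right_notMem : (G.pairing w).1 ∉ S
  pairing_mem : ∀ v : G.V, v.1 ∈ S → v ≠ u → v ≠ w → (G.pairing v).1 ∈ S

/-- A function separating, within the bubbles of `x` and `G.pairing x`, the color-`a` edges at
these two vertices from the opposite ones. Such functions describe what is left of the graph when
the two bubbles of a face of color `c` and length 2 are removed. -/
structure IsSeparator (G : TGraph) (c a : Fin 3) (x : G.V) (f : G.V → ZMod 2) : Prop where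
  pairing : ∀ v, f (G.pairing v) = f v
  colPerm : ∀ v, f (G.colPerm a v) = f v
  colPerm_of_ne : ∀ v, v.1 ≠ x.1 → v.1 ≠ (G.pairing x).1 → ∀ d, f (G.colPerm d v) = f v
  colPerm_root : f (G.colPerm c x) = f x + 1

section Regions

variable {G : TGraph} {a b c : Fin 3} {S : Set G.B} {s t v x : G.V} {f : G.V → ZMod 2}

theorem pairing_eq_or_isCut (hs : s.1 ∉ S) (ht : t.1 ∉ S) (hst : s ≠ t)
    (h : ∀ v : G.V, v.1 ∈ S ∨ v = s ∨ v = t →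
      (G.pairing v).1 ∈ S ∨ G.pairing v = s ∨ G.pairing v = t) :
    G.pairing s = t ∨ G.IsCut S (G.pairing s) (G.pairing t) := by
  refine or_iff_not_imp_left.2 fun hne => ?_
  have hne' : G.pairing t ≠ s := fun e => hne (by rw [← e, G.invol])
  refine ⟨?_, ?_, G.pairing.injective.ne hst, by rwa [G.invol], by rwa [G.invol], ?_⟩
  · simpa [hne, G.fixfree] using h s
  · simpa [hne', G.fixfree] using h t
  · intro v hv hvs hvt
    have hs' : G.pairing v ≠ s := fun e => hvs (by rw [← e, G.invol])
    have ht' : G.pairing v ≠ t := fun e => hvt (by rw [← e, G.invol])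
    simpa [hs', ht'] using h v (Or.inl hv)

theorem IsSeparator.symm (h : G.IsSeparator c a x f) (hx : G.IsParallel c x) :
    G.IsSeparator c a (G.pairing x) f where
  pairing := h.pairing
  colPerm := h.colPerm
  colPerm_of_ne v hv hv' := h.colPerm_of_ne v (by rwa [G.invol] at hv') hv
  colPerm_root := by rw [← hx, h.pairing, h.pairing, h.colPerm_root]

theorem IsSeparator.eq_or_eq_colPerm (h : G.IsSeparator c a x f) (hac : a ≠ c)
    (hv : v.1 = x.1) (hf : f v = f x) : v = x ∨ v = G.colPerm a x := by
  obtain ⟨b, hab, hcb⟩ := exists_third_color a c hac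
  have hcx : f (G.colPerm c x) ≠ f x := by simp [h.colPerm_root]
  obtain rfl | rfl | rfl | rfl := eq_or_eq_colPerm_or hac hab hcb hv
  · exact Or.inl rfl
  · exact Or.inr rfl
  · exact absurd hf hcx
  · rw [← colPerm_colPerm hac hab hcb, h.colPerm] at hf
    exact absurd hf hcx

/-- The bubbles, other than those of `x` and `G.pairing x`, on which `f` takes the value `f x`;
only used for functions that are constant on these bubbles. -/
def region (G : TGraph) (x : G.V) (f : G.V → ZMod 2) : Set G.B :=
  {β | β ≠ x.1 ∧ β ≠ (G.pairing x).1 ∧ f (β, 0) = f x}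

theorem IsSeparator.mem_region_iff (h : G.IsSeparator c a x f) :
    v.1 ∈ G.region x f ↔ v.1 ≠ x.1 ∧ v.1 ≠ (G.pairing x).1 ∧ f v = f x := by
  refine and_congr_right fun hx => and_congr_right fun hpx => ?_
  obtain hv | ⟨d, hd⟩ := eq_or_exists_eq_colPerm (u := ((v.1, 0) : G.V)) (v := v) rfl
  · rw [hv]
  · rw [hd, h.colPerm_of_ne v hx hpx]

theorem IsSeparator.mem_region_or_iff (h : G.IsSeparator c a x f) (hac : a ≠ c)
    (hx : G.IsParallel c x) (hne : (G.pairing x).1 ≠ x.1) :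
    v.1 ∈ G.region x f ∨ v = G.colPerm a x ∨ v = G.colPerm a (G.pairing x) ↔
      f v = f x ∧ v ≠ x ∧ v ≠ G.pairing x := by
  have hfp := h.pairing x
  constructor
  · rintro (hv | rfl | rfl)
    · obtain ⟨hvx, hvp, hf⟩ := h.mem_region_iff.1 hv
      exact ⟨hf, fun e => hvx (congrArg Prod.fst e), fun e => hvp (congrArg Prod.fst e)⟩
    · exact ⟨h.colPerm x, colPerm_ne a x, fun e => hne (congrArg Prod.fst e).symm⟩
    · exact ⟨by rw [h.colPerm, hfp], fun e => hne (Prod.ext_iff.1 e).1, colPerm_ne a _⟩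
  · rintro ⟨hf, hvx, hvp⟩
    by_cases hX : v.1 = x.1
    · exact Or.inr (Or.inl ((h.eq_or_eq_colPerm hac hX hf).resolve_left hvx))
    by_cases hY : v.1 = (G.pairing x).1
    · exact Or.inr (Or.inr
        (((h.symm hx).eq_or_eq_colPerm hac hY (hf.trans hfp.symm)).resolve_left hvp))
    exact Or.inl (h.mem_region_iff.2 ⟨hX, hY, hf⟩)

theorem IsSeparator.isParallel_or_isCut (h : G.IsSeparator c a x f) (hac : a ≠ c)
    (hx : G.IsParallel c x) (hne : (G.pairing x).1 ≠ x.1) :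
    G.IsParallel a x ∨ G.IsCut (G.region x f) (G.pairing (G.colPerm a x))
      (G.pairing (G.colPerm a (G.pairing x))) := by
  refine pairing_eq_or_isCut (fun hS => hS.1 rfl) (fun hS => hS.2.1 rfl)
    (fun e => hne (congrArg Prod.fst e).symm) fun v hv => ?_
  rw [h.mem_region_or_iff hac hx hne] at hv ⊢
  exact ⟨by rw [h.pairing, hv.1], fun e => hv.2.2 (by rw [← e, G.invol]),
    fun e => hv.2.1 (G.pairing.injective e)⟩

theorem IsExtremal.exists_add_eq_indicator (hG : G.IsExtremal) (hab : a ≠ b)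
    (hx : G.IsParallel c x) :
    ∃ f ∈ G.pairingInvariants ⊓ G.colInvariants a, ∃ g ∈ G.pairingInvariants ⊓ G.colInvariants b,
      ∀ v, f v + g v =
        if v = x ∨ v = G.pairing x ∨ v = G.colPerm c x ∨ v = G.colPerm c (G.pairing x)
          then 1 else 0 := by
  set i : G.V → ZMod 2 := fun v =>
    if v = x ∨ v = G.pairing x ∨ v = G.colPerm c x ∨ v = G.colPerm c (G.pairing x) then 1 else 0
    with hi
  have hmem : i ∈ G.pairingInvariants ⊓ G.colInvariants c := by
    have hp : ∀ v w, G.pairing v = w ↔ v = G.pairing w := fun v w =>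
      ⟨fun e => by rw [← e, G.invol], fun e => by rw [e, G.invol]⟩
    have hc : ∀ v w, G.colPerm c v = w ↔ v = G.colPerm c w := fun v w =>
      (colPerm_involutive c).eq_iff
    constructor <;> intro v
    · simp only [hi, hp, hx.symm, G.invol]
      grind
    · simp only [hi, hc, colPerm_involutive c _]
      grind
  obtain ⟨f, hf, g, hg, hfg⟩ := Submodule.mem_sup.1 (hG.inf_le_sup hab c hmem)
  exact ⟨f, hf, g, hg, congrFun hfg⟩

theorem isSeparator_of_add_eq_indicator (hab : a ≠ b) (hac : a ≠ c) (hbc : b ≠ c)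
    (hne : (G.pairing x).1 ≠ x.1) {g : G.V → ZMod 2}
    (hf : f ∈ G.pairingInvariants ⊓ G.colInvariants a)
    (hg : g ∈ G.pairingInvariants ⊓ G.colInvariants b)
    (hfg : ∀ v, f v + g v =
      if v = x ∨ v = G.pairing x ∨ v = G.colPerm c x ∨ v = G.colPerm c (G.pairing x)
        then 1 else 0) :
    G.IsSeparator c a x f where
  pairing := hf.1
  colPerm := hf.2
  colPerm_of_ne v hvx hvp d := by
    have heq (w : G.V) (hw : w.1 = v.1) : f w = g w := by
      refine CharTwo.add_eq_zero.1 ((hfg w).trans (if_neg ?_))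
      rintro (rfl | rfl | rfl | rfl)
      exacts [hvx hw.symm, hvp hw.symm, hvx hw.symm, hvp hw.symm]
    obtain rfl | rfl | rfl := color_eq_or_eq_or_eq a b c hab hac hbc d
    · exact hf.2 v
    · rw [heq v rfl, heq (G.colPerm _ v) rfl, hg.2]
    · rw [← colPerm_colPerm hab hac hbc, hf.2, heq v rfl, heq (G.colPerm _ v) rfl, hg.2]
  colPerm_root := by
    have hx : f x + g x = 1 := (hfg x).trans (if_pos (Or.inl rfl))
    have hcx : f (G.colPerm c x) + g (G.colPerm c x) = 1 := (hfg _).trans (if_pos (by simp))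
    have hax : f (G.colPerm a x) + g (G.colPerm a x) = 0 := by
      refine (hfg _).trans (if_neg ?_)
      rintro (e | e | e | e)
      exacts [colPerm_ne a x e, hne (Prod.ext_iff.1 e).1.symm, colPerm_ne_colPerm hac x e,
        hne (Prod.ext_iff.1 e).1.symm]
    rw [← colPerm_colPerm hab.symm hbc hac, hg.2] at hcx
    rw [hf.2] at hax
    rw [← colPerm_colPerm hab.symm hbc hac]
    grind

theorem IsExtremal.exists_isSeparator (hG : G.IsExtremal) (hab : a ≠ b) (hac : a ≠ c)
    (hbc : b ≠ c) (hx : G.IsParallel c x) :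
    ∃ f g, G.IsSeparator c a x f ∧ G.IsSeparator c b x g ∧
      Disjoint (G.region x f) (G.region x g) := by
  obtain ⟨f, hf, g, hg, hfg⟩ := hG.exists_add_eq_indicator hab hx
  have hne := hG.pairing_fst_ne x
  refine ⟨f, g, isSeparator_of_add_eq_indicator hab hac hbc hne hf hg hfg,
    isSeparator_of_add_eq_indicator hab.symm hbc hac hne hg hf
      fun v => (add_comm _ _).trans (hfg v), Set.disjoint_left.2 fun β hS hT => ?_⟩
  have hβ : f (β, 0) + g (β, 0) = 0 := by
    refine (hfg _).trans (if_neg ?_)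
    rintro (e | e | e | e)
    exacts [hS.1 (Prod.ext_iff.1 e).1, hS.2.1 (Prod.ext_iff.1 e).1, hS.1 (Prod.ext_iff.1 e).1,
      hS.2.1 (Prod.ext_iff.1 e).1]
  rw [hS.2.2, hT.2.2, hfg, if_pos (Or.inl rfl)] at hβ
  exact one_ne_zero hβ

theorem IsExtremal.exists_disjoint_isCut (hG : G.IsExtremal) (hab : a ≠ b) (hac : a ≠ c)
    (hbc : b ≠ c) (hx : G.IsParallel c x) :
    ∃ S T : Set G.B, Disjoint S T ∧
      (G.IsParallel a x ∨
        G.IsCut S (G.pairing (G.colPerm a x)) (G.pairing (G.colPerm a (G.pairing x)))) ∧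
      (G.IsParallel b x ∨
        G.IsCut T (G.pairing (G.colPerm b x)) (G.pairing (G.colPerm b (G.pairing x)))) := by
  obtain ⟨f, g, hf, hg, hdisj⟩ := hG.exists_isSeparator hab hac hbc hx
  have hne := hG.pairing_fst_ne x
  exact ⟨_, _, hdisj, hf.isParallel_or_isCut hac hx hne, hg.isParallel_or_isCut hbc hx hne⟩

end Regions

/-! ### Gluing and two-edge cuts -/

theorem b_eq_of_equiv {G H K : TGraph} (e : H.V ⊕ K.V ≃ G.V) : G.b = H.b + K.b := by
  have hcard := Fintype.card_congr e
  rw [Fintype.card_sum, card_V, card_V, card_V] at hcard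
  omega

/-- The equivalence `e` presents `G` as the graph obtained by gluing `H` and `K` along the color-0
edges through `p` and `q`, that is, as a graph isomorphic to `glue H K p q`. -/
structure IsGluing {G H K : TGraph} (e : H.V ⊕ K.V ≃ G.V) (p : H.V) (q : K.V) : Prop where
  left_colPerm : ∀ c x, e (.inl (H.colPerm c x)) = G.colPerm c (e (.inl x))
  right_colPerm : ∀ c y, e (.inr (K.colPerm c y)) = G.colPerm c (e (.inr y))
  pairing_root : G.pairing (e (.inl p)) = e (.inr q)
  pairing_root' : G.pairing (e (.inl (H.pairing p))) = e (.inr (K.pairing q))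
  left_pairing : ∀ x, x ≠ p → x ≠ H.pairing p → G.pairing (e (.inl x)) = e (.inl (H.pairing x))
  right_pairing : ∀ y, y ≠ q → y ≠ K.pairing q → G.pairing (e (.inr y)) = e (.inr (K.pairing y))

namespace IsGluing

variable {G H K : TGraph} {e : H.V ⊕ K.V ≃ G.V} {p : H.V} {q : K.V}

theorem symm (h : IsGluing e p q) : IsGluing ((Equiv.sumComm _ _).trans e) q p where
  left_colPerm := h.right_colPerm
  right_colPerm := h.left_colPerm
  pairing_root := (congrArg G.pairing h.pairing_root).symm.trans (G.invol _)
  pairing_root' := (congrArg G.pairing h.pairing_root').symm.trans (G.invol _)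
  left_pairing := h.right_pairing
  right_pairing := h.left_pairing

section Extension

variable {R : Type*} {f : H.V → R} {g : K.V → R} {c : Fin 3}

/-- The function on the vertices of a glued graph restricting to `f` and `g` on the two parts. -/
def extension (e : H.V ⊕ K.V ≃ G.V) (f : H.V → R) (g : K.V → R) : G.V → R :=
  Sum.elim f g ∘ e.symm

@[simp]
theorem extension_inl (x : H.V) : extension e f g (e (.inl x)) = f x := by simp [extension]

@[simp]
theorem extension_inr (y : K.V) : extension e f g (e (.inr y)) = g y := by simp [extension]

theorem extension_pairing_inl (h : IsGluing e p q) (hf : ∀ x, f (H.pairing x) = f x)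
    (hg : ∀ y, g (K.pairing y) = g y) (hpq : f p = g q) (x : H.V) :
    extension e f g (G.pairing (e (.inl x))) = f x := by
  by_cases hp : x = p
  · simp [hp, h.pairing_root, hpq]
  by_cases hp' : x = H.pairing p
  · simp [hp', h.pairing_root', hf, hg, hpq]
  simp [h.left_pairing x hp hp', hf]

theorem extension_sumComm :
    extension ((Equiv.sumComm _ _).trans e) g f = extension e f g := by
  funext v
  obtain ⟨x | y, rfl⟩ := e.surjective v <;> simp [extension]

theorem extension_pairing (h : IsGluing e p q) (hf : ∀ x, f (H.pairing x) = f x)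
    (hg : ∀ y, g (K.pairing y) = g y) (hpq : f p = g q) (v : G.V) :
    extension e f g (G.pairing v) = extension e f g v := by
  obtain ⟨x | y, rfl⟩ := e.surjective v
  · rw [h.extension_pairing_inl hf hg hpq, extension_inl]
  · rw [extension_inr]
    exact (congrFun extension_sumComm.symm _).trans (h.symm.extension_pairing_inl hg hf hpq.symm y)

theorem extension_colPerm (h : IsGluing e p q) (hf : ∀ x, f (H.colPerm c x) = f x)
    (hg : ∀ y, g (K.colPerm c y) = g y) (v : G.V) :
    extension e f g (G.colPerm c v) = extension e f g v := by
  obtain ⟨x | y, rfl⟩ := e.surjective v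
  · simp [← h.left_colPerm, hf]
  · simp [← h.right_colPerm, hg]

end Extension

section Faces

variable {c : Fin 3} {f : G.V → ZMod 2}

-- The sum of `f` over the vertices of `H` vanishes since `f` is invariant under the color-`c`
-- edges of `H`; the color-0 edges of `H` other than the root edge do not contribute to it.
theorem apply_pairing_root (h : IsGluing e p q)
    (hf : f ∈ G.pairingInvariants ⊓ G.colInvariants c) :
    f (e (.inl (H.pairing p))) = f (e (.inl p)) := by
  let r : H.V → ZMod 2 := fun x => f (e (.inl x))
  let d : ZMod 2 := r p + r (H.pairing p)
  have hr : r ∈ H.colInvariants c := fun x => by simp only [r, h.left_colPerm, hf.2 _]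
  have hrd : r + Pi.single p d ∈ H.pairingInvariants := by
    intro x
    by_cases hp : x = p
    · subst hp
      simp only [Pi.add_apply, Pi.single_eq_same, Pi.single_eq_of_ne (H.fixfree x), d]
      grind
    by_cases hp' : x = H.pairing p
    · subst hp'
      simp only [Pi.add_apply, H.invol, Pi.single_eq_same, Pi.single_eq_of_ne (H.fixfree p), d]
      grind
    have hne : H.pairing x ≠ p := fun e => hp' (by rw [← e, H.invol])
    simp only [Pi.add_apply, Pi.single_eq_of_ne hp, Pi.single_eq_of_ne hne, r,
      ← h.left_pairing x hp hp', hf.1 _]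
  have hsum : 1 ⬝ᵥ r = 0 := H.colInvariants_isotropic c hr 1 fun _ => rfl
  have hsum' : 1 ⬝ᵥ (r + Pi.single p d) = 0 := H.pairingInvariants_isotropic hrd 1 fun _ => rfl
  rw [dotProduct_add, hsum, dotProduct_single, zero_add, Pi.one_apply, one_mul] at hsum'
  exact (CharTwo.add_eq_zero.1 hsum').symm

theorem comp_inl_mem (h : IsGluing e p q) (hf : f ∈ G.pairingInvariants ⊓ G.colInvariants c) :
    (fun x => f (e (.inl x))) ∈ H.pairingInvariants ⊓ H.colInvariants c := by
  refine ⟨fun x => ?_, fun x => by simp only [h.left_colPerm, hf.2 _]⟩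
  by_cases hp : x = p
  · simp only [hp, h.apply_pairing_root hf]
  by_cases hp' : x = H.pairing p
  · simp only [hp', H.invol, h.apply_pairing_root hf]
  simp only [← h.left_pairing x hp hp', hf.1 _]

/-- The restriction of the functions which are constant on the faces of color `c` of a glued
graph to the two parts. -/
def restriction (h : IsGluing e p q) (c : Fin 3) :
    ↥(G.pairingInvariants ⊓ G.colInvariants c) →ₗ[ZMod 2]
      ↥(H.pairingInvariants ⊓ H.colInvariants c) × ↥(K.pairingInvariants ⊓ K.colInvariants c) :=
  ((LinearMap.funLeft (ZMod 2) (ZMod 2) (e ∘ .inl)).restrict fun _ => h.comp_inl_mem).prod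
    ((LinearMap.funLeft (ZMod 2) (ZMod 2) (e ∘ .inr)).restrict fun _ => h.symm.comp_inl_mem)

theorem restriction_injective (h : IsGluing e p q) (c : Fin 3) :
    Function.Injective (h.restriction c) := by
  intro f g hfg
  refine Subtype.ext (funext fun v => ?_)
  obtain ⟨x | y, rfl⟩ := e.surjective v
  · exact congrFun (congrArg (fun r => r.1.1) hfg) x
  · exact congrFun (congrArg (fun r => r.2.1) hfg) y

/-- The sum of the values at `p` and `q`, on pairs of functions which are constant on the
faces of color `c` of `H` and `K`; in characteristic two it vanishes when the values agree. -/
def rootSum (c : Fin 3) (p : H.V) (q : K.V) :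
    Dual (ZMod 2)
      (↥(H.pairingInvariants ⊓ H.colInvariants c) × ↥(K.pairingInvariants ⊓ K.colInvariants c)) :=
  ((LinearMap.proj p).domRestrict _).coprod ((LinearMap.proj q).domRestrict _)

theorem rootSum_ne_zero (c : Fin 3) (p : H.V) (q : K.V) : rootSum c p q ≠ 0 := by
  intro h
  have hone := LinearMap.congr_fun h (⟨1, fun _ => rfl, fun _ => rfl⟩, 0)
  simp [rootSum] at hone

theorem mem_ker_rootSum {r : ↥(H.pairingInvariants ⊓ H.colInvariants c) ×
    ↥(K.pairingInvariants ⊓ K.colInvariants c)} :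
    r ∈ LinearMap.ker (rootSum c p q) ↔ r.1.1 p = r.2.1 q := by
  simp [rootSum, CharTwo.add_eq_zero]

theorem range_restriction (h : IsGluing e p q) (c : Fin 3) :
    LinearMap.range (h.restriction c) = LinearMap.ker (rootSum c p q) := by
  ext ⟨⟨f, hf⟩, g, hg⟩
  rw [mem_ker_rootSum]
  constructor
  · rintro ⟨⟨F, hF⟩, hFfg⟩
    rw [← hFfg]
    exact (hF.1 _).symm.trans (congrArg F h.pairing_root)
  · intro hpq
    refine ⟨⟨extension e f g, h.extension_pairing hf.1 hg.1 hpq,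
      h.extension_colPerm hf.2 hg.2⟩, Prod.ext (Subtype.ext ?_) (Subtype.ext ?_)⟩
    exacts [funext extension_inl, funext extension_inr]

theorem numFaces_add_one (h : IsGluing e p q) (c : Fin 3) :
    G.numFaces c + 1 = H.numFaces c + K.numFaces c := by
  rw [numFaces_eq_finrank, numFaces_eq_finrank, numFaces_eq_finrank, ← finrank_prod,
    ← Dual.finrank_ker_add_one_of_ne_zero (rootSum_ne_zero c p q), ← h.range_restriction,
    LinearMap.finrank_range_of_inj (h.restriction_injective c)]

end Faces

theorem F_add_three (h : IsGluing e p q) : G.F + 3 = H.F + K.F := by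
  have h₀ := h.numFaces_add_one 0
  have h₁ := h.numFaces_add_one 1
  have h₂ := h.numFaces_add_one 2
  rw [F_eq, F_eq, F_eq]
  omega

theorem connected (h : IsGluing e p q) (hH : H.Connected) (hK : K.Connected) : G.Connected := by
  rw [connected_iff (ZMod 2)] at hH hK ⊢
  intro f hp hc
  have hmem (c : Fin 3) : f ∈ G.pairingInvariants ⊓ G.colInvariants c := ⟨hp, hc c⟩
  have hroot (v : G.V) : f v = f (e (.inl p)) := by
    obtain ⟨x | y, rfl⟩ := e.surjective v
    · exact hH (fun x => f (e (.inl x))) (h.comp_inl_mem (hmem 0)).1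
        (fun c => (h.comp_inl_mem (hmem c)).2) x p
    · rw [← hp (e (.inl p)), h.pairing_root]
      exact hK (fun y => f (e (.inr y))) (h.symm.comp_inl_mem (hmem 0)).1
        (fun c => (h.symm.comp_inl_mem (hmem c)).2) y q
  exact fun u v => (hroot u).trans (hroot v).symm

theorem connected_left (h : IsGluing e p q) (hG : G.Connected) : H.Connected := by
  rw [connected_iff (ZMod 2)] at hG ⊢
  intro f hp hc x y
  have hconst := hG (extension e f fun _ => f p) (h.extension_pairing hp (fun _ => rfl) rfl)
    (fun c => h.extension_colPerm (hc c) fun _ => rfl) (e (.inl x)) (e (.inl y))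
  simpa only [extension_inl] using hconst

theorem isExtremal_left (h : IsGluing e p q) (hG : G.IsExtremal) : H.IsExtremal := by
  have hH := h.connected_left hG.1
  have hboundH := hH.two_mul_F_le
  have hboundK := (h.symm.connected_left hG.1).two_mul_F_le
  have hF := h.F_add_three
  have hb := b_eq_of_equiv e
  have hFG := hG.2
  exact ⟨hH, by omega⟩

theorem isExtremal (h : IsGluing e p q) (hH : H.IsExtremal) (hK : K.IsExtremal) :
    G.IsExtremal := by
  have hF := h.F_add_three
  have hb := b_eq_of_equiv e
  have hFH := hH.2
  have hFK := hK.2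
  exact ⟨h.connected hH.1 hK.1, by omega⟩

end IsGluing

theorem isGluing_glue (H K : TGraph) (p : H.V) (q : K.V) :
    IsGluing (G := glue H K p q) (Equiv.sumProdDistrib H.B K.B (Fin 4)).symm p q where
  left_colPerm _ _ := rfl
  right_colPerm _ _ := rfl
  pairing_root := (glueFun_inlV H K p q p).trans (if_pos rfl)
  pairing_root' :=
    (glueFun_inlV H K p q _).trans ((if_neg (H.fixfree p)).trans (if_pos rfl))
  left_pairing x hp hp' := (glueFun_inlV H K p q x).trans ((if_neg hp).trans (if_neg hp'))
  right_pairing y hq hq' := (glueFun_inrV H K p q y).trans ((if_neg hq).trans (if_neg hq'))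

section Flip

variable {G : TGraph} {u w v : G.V}

theorem flip_pairing (u w v : G.V) : (G.flip u w).pairing v =
    swap (G.pairing u) w (G.pairing (swap (G.pairing u) w v)) := rfl

theorem flip_pairing_left (h : u ≠ w) : (G.flip u w).pairing u = w := by
  rw [flip_pairing, swap_apply_of_ne_of_ne (G.fixfree u).symm h, swap_apply_left]

theorem flip_pairing_right (h : u ≠ w) : (G.flip u w).pairing w = u := by
  rw [flip_pairing, swap_apply_right, G.invol, swap_apply_of_ne_of_ne (G.fixfree u).symm h]

theorem flip_pairing_pairing (h : u ≠ w) :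
    (G.flip u w).pairing (G.pairing u) = G.pairing w := by
  rw [flip_pairing, swap_apply_left,
    swap_apply_of_ne_of_ne (G.pairing.injective.ne h.symm) (G.fixfree w)]

theorem flip_pairing_of_ne (hu : v ≠ u) (hw : v ≠ w) (hpu : v ≠ G.pairing u)
    (hpw : v ≠ G.pairing w) : (G.flip u w).pairing v = G.pairing v := by
  have hpw' : G.pairing v ≠ w := fun e => hpw (by rw [← e, G.invol])
  rw [flip_pairing, swap_apply_of_ne_of_ne hpu hw,
    swap_apply_of_ne_of_ne (G.pairing.injective.ne hu) hpw']

end Flip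

/-- The subgraph of `G` on a set `S` of bubbles which is a union of connected components. -/
noncomputable def restrict (G : TGraph) (S : Set G.B)
    (hS : ∀ v : G.V, (G.pairing v).1 ∈ S ↔ v.1 ∈ S) : TGraph where
  B := S
  fintypeB := Fintype.ofFinite S
  decB := Classical.decEq S
  pairing := prodSubtypeFstEquivSubtypeProd.permCongr (G.pairing.subtypePerm hS)
  invol v := Prod.ext (Subtype.ext (congrArg Prod.fst (G.invol (v.1, v.2))))
    (congrArg Prod.snd (G.invol (v.1, v.2)) :)
  fixfree v h := G.fixfree (v.1, v.2) (congrArg (fun y => (y.1.1, y.2)) h)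

namespace IsCut

variable {G : TGraph} {S : Set G.B} {u w : G.V}

theorem flip_pairing_mem (h : G.IsCut S u w) {v : G.V} (hv : v.1 ∈ S) :
    ((G.flip u w).pairing v).1 ∈ S := by
  by_cases hu : v = u
  · rw [hu, flip_pairing_left h.ne]
    exact h.right_mem
  by_cases hw : v = w
  · rw [hw, flip_pairing_right h.ne]
    exact h.left_mem
  rw [flip_pairing_of_ne hu hw (fun e => h.pairing_left_notMem (e ▸ hv))
    fun e => h.pairing_right_notMem (e ▸ hv)]
  exact h.pairing_mem v hv hu hw

theorem flip_pairing_mem_iff (h : G.IsCut S u w) (v : G.V) :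
    ((G.flip u w).pairing v).1 ∈ S ↔ v.1 ∈ S :=
  ⟨fun hv => (G.flip u w).invol v ▸ h.flip_pairing_mem hv, h.flip_pairing_mem⟩

/-- The side `S` of a cut, closed by joining its two external vertices. -/
noncomputable abbrev inside (h : G.IsCut S u w) : TGraph :=
  (G.flip u w).restrict S h.flip_pairing_mem_iff

/-- The side of a cut complementary to `S`, closed by joining its two external vertices. -/
noncomputable abbrev outside (h : G.IsCut S u w) : TGraph :=
  (G.flip u w).restrict Sᶜ fun v => not_congr (h.flip_pairing_mem_iff v)

open Classical in
/-- The vertices of the two sides of a cut are the vertices of the graph. -/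
noncomputable def sides (h : G.IsCut S u w) : h.inside.V ⊕ h.outside.V ≃ G.V :=
  (sumProdDistrib S ↥Sᶜ (Fin 4)).symm.trans ((Set.sumCompl S).prodCongr (Equiv.refl _))

theorem b_inside_lt (h : G.IsCut S u w) : h.inside.b < G.b := by
  rw [b_eq_of_equiv h.sides]
  exact Nat.lt_add_of_pos_right (Fintype.card_pos_iff.2 ⟨_, h.pairing_left_notMem⟩)

theorem b_outside_lt (h : G.IsCut S u w) : h.outside.b < G.b := by
  rw [b_eq_of_equiv h.sides]
  exact Nat.lt_add_of_pos_left (Fintype.card_pos_iff.2 ⟨_, h.left_mem⟩)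

theorem isGluing (h : G.IsCut S u w) :
    IsGluing h.sides ((⟨u.1, h.left_mem⟩, u.2) : h.inside.V)
      ((⟨(G.pairing u).1, h.pairing_left_notMem⟩, (G.pairing u).2) : h.outside.V) where
  left_colPerm _ _ := rfl
  right_colPerm _ _ := rfl
  pairing_root := rfl
  pairing_root' := (congrArg G.pairing (flip_pairing_left h.ne)).trans
    (flip_pairing_pairing h.ne).symm
  left_pairing x hu hw :=
    (flip_pairing_of_ne (fun e => hu (Sum.inl_injective (h.sides.injective e)))
      (fun e => hw (Sum.inl_injective
        (h.sides.injective (e.trans (flip_pairing_left h.ne).symm))))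
      (fun e => h.pairing_left_notMem (e ▸ x.1.2))
      (fun e => h.pairing_right_notMem (e ▸ x.1.2))).symm
  right_pairing y hu hw :=
    (flip_pairing_of_ne
      (fun e => y.1.2 (Set.mem_of_eq_of_mem (congrArg Prod.fst e) h.left_mem))
      (fun e => y.1.2 (Set.mem_of_eq_of_mem (congrArg Prod.fst e) h.right_mem))
      (fun e => hu (Sum.inr_injective (h.sides.injective e)))
      (fun e => hw (Sum.inr_injective
        (h.sides.injective (e.trans (flip_pairing_pairing h.ne).symm))))).symm

end IsCut

/-! ### Melonic dipoles -/

/-- The bubbles of `z` and `w` are joined by three color-0 edges matching the vertices of the same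
type, so that they form a melonic dipole whose external vertices are `z` and `w`. -/
structure IsDipole (G : TGraph) (z w : G.V) : Prop where
  fst_ne : z.1 ≠ w.1
  pairing_colPerm : ∀ c, G.pairing (G.colPerm c z) = G.colPerm c w

/-- The graph contains a melonic dipole none of whose internal color-0 edges goes through `e`. -/
def HasDipoleAvoiding (G : TGraph) (e : G.V) : Prop :=
  ∃ z w, G.IsDipole z w ∧ ∀ c, G.colPerm c z ≠ e ∧ G.colPerm c w ≠ e

section Dipoles

variable {G H K : TGraph} {a b c : Fin 3} {e v w x z : G.V}

theorem IsDipole.symm (h : G.IsDipole z w) : G.IsDipole w z where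
  fst_ne := h.fst_ne.symm
  pairing_colPerm c := by rw [← h.pairing_colPerm, G.invol]

theorem IsDipole.pairing_notMem (h : G.IsDipole z w) (hz : (G.pairing z).1 ≠ z.1)
    (hzw : G.pairing z ≠ w) : (G.pairing z).1 ∉ ({z.1, w.1} : Set G.B) := by
  rintro (hmem | hmem)
  · exact hz hmem
  · obtain heq | ⟨c, hc⟩ := eq_or_exists_eq_colPerm hmem
    · exact hzw heq
    · rw [← h.pairing_colPerm] at hc
      exact colPerm_ne c z (G.pairing.injective hc).symm

theorem IsDipole.isCut (h : G.IsDipole z w) (hz : (G.pairing z).1 ≠ z.1)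
    (hw : (G.pairing w).1 ≠ w.1) (hzw : G.pairing z ≠ w) : G.IsCut {z.1, w.1} z w where
  left_mem := Or.inl rfl
  right_mem := Or.inr rfl
  ne hne := h.fst_ne (congrArg Prod.fst hne)
  pairing_left_notMem := h.pairing_notMem hz hzw
  pairing_right_notMem := by
    rw [Set.pair_comm]
    exact h.symm.pairing_notMem hw fun hwz => hzw (by rw [← hwz, G.invol])
  pairing_mem := by
    rintro v (hv | hv) hvz hvw
    · obtain ⟨c, rfl⟩ := (eq_or_exists_eq_colPerm hv).resolve_left hvz
      rw [h.pairing_colPerm]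
      exact Or.inr rfl
    · obtain ⟨c, rfl⟩ := (eq_or_exists_eq_colPerm hv).resolve_left hvw
      rw [h.symm.pairing_colPerm]
      exact Or.inl rfl

theorem IsGluing.left_fst_eq_iff {e : H.V ⊕ K.V ≃ G.V} {p : H.V} {q : K.V} (h : IsGluing e p q)
    {x y : H.V} : (e (.inl x)).1 = (e (.inl y)).1 ↔ x.1 = y.1 := by
  constructor <;> intro hxy
  · obtain heq | ⟨c, hc⟩ := eq_or_exists_eq_colPerm hxy
    · rw [Sum.inl_injective (e.injective heq)]
    · rw [← h.left_colPerm] at hc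
      rw [Sum.inl_injective (e.injective hc)]
      rfl
  · obtain rfl | ⟨c, rfl⟩ := eq_or_exists_eq_colPerm hxy
    · rfl
    · rw [h.left_colPerm]
      rfl

theorem IsGluing.isDipole_root {e : H.V ⊕ K.V ≃ G.V} {p : H.V} {q : K.V} (h : IsGluing e p q)
    (hd : G.IsDipole (e (.inl p)) (e (.inl (H.pairing p)))) : H.IsDipole p (H.pairing p) where
  fst_ne hp := hd.fst_ne (h.left_fst_eq_iff.2 hp)
  pairing_colPerm c := by
    have hne : H.colPerm c p ≠ H.pairing p := fun hp =>
      hd.fst_ne (h.left_fst_eq_iff.2 (congrArg Prod.fst hp :))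
    apply Sum.inl_injective (β := K.V)
    apply e.injective
    rw [← h.left_pairing _ (colPerm_ne c p) hne, h.left_colPerm, hd.pairing_colPerm,
      h.left_colPerm]

theorem IsGluing.hasDipoleAvoiding {e : H.V ⊕ K.V ≃ G.V} {p : H.V} {q : K.V}
    (h : IsGluing e p q) (hd : H.HasDipoleAvoiding p) (hv : ∀ x, e (.inl x) ≠ v) :
    G.HasDipoleAvoiding v := by
  obtain ⟨z, w, hzw, hp⟩ := hd
  refine ⟨e (.inl z), e (.inl w), ⟨fun hne => hzw.fst_ne (h.left_fst_eq_iff.1 hne), fun c => ?_⟩,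
    fun c => ⟨?_, ?_⟩⟩
  · have hne : H.colPerm c z ≠ H.pairing p := fun heq =>
      (hp c).2 (by rw [← hzw.pairing_colPerm, heq, H.invol])
    rw [← h.left_colPerm, ← h.left_colPerm, h.left_pairing _ (hp c).1 hne, hzw.pairing_colPerm]
  all_goals
    rw [← h.left_colPerm]
    exact hv _

theorem hasDipoleAvoiding_of_isParallel (hab : a ≠ b) (hac : a ≠ c) (hbc : b ≠ c)
    (ha : G.IsParallel a x) (hc : G.IsParallel c x) (hx : (G.pairing x).1 ≠ x.1)
    (hex : e.1 ≠ x.1) (hep : e.1 ≠ (G.pairing x).1) : G.HasDipoleAvoiding e := by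
  refine ⟨G.colPerm b x, G.colPerm b (G.pairing x), ⟨hx.symm, fun d => ?_⟩,
    fun d => ⟨fun heq => hex (congrArg Prod.fst heq).symm,
      fun heq => hep (congrArg Prod.fst heq).symm⟩⟩
  obtain rfl | rfl | rfl := color_eq_or_eq_or_eq a b c hab hac hbc d
  · rw [colPerm_colPerm hab hac hbc, colPerm_colPerm hab hac hbc, hc]
  · rw [colPerm_involutive, colPerm_involutive]
  · rw [colPerm_colPerm hbc.symm hac.symm hab.symm, colPerm_colPerm hbc.symm hac.symm hab.symm, ha]

theorem isParallel_of_fst_eq (h : ∀ d, G.IsParallel d x) (hv : v.1 = x.1) (d : Fin 3) :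
    G.IsParallel d v := by
  obtain rfl | ⟨c, rfl⟩ := eq_or_exists_eq_colPerm hv
  · exact h d
  rw [IsParallel, h c]
  obtain rfl | hdc := eq_or_ne d c
  · rw [colPerm_involutive, colPerm_involutive]
  · obtain ⟨r, hdr, hcr⟩ := exists_third_color d c hdc
    rw [colPerm_colPerm hdc hdr hcr, colPerm_colPerm hdc hdr hcr, h r]

theorem hasDipoleAvoiding_self (h : ∀ d, G.IsParallel d e) (he : (G.pairing e).1 ≠ e.1) :
    G.HasDipoleAvoiding e :=
  ⟨e, G.pairing e, ⟨he.symm, h⟩,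
    fun c => ⟨colPerm_ne c e, fun heq => he (congrArg Prod.fst heq :)⟩⟩

theorem IsExtremal.hasDipoleAvoiding_of_forall_isParallel (hG : G.IsExtremal)
    (h : ∀ d, G.IsParallel d x) (e : G.V) : G.HasDipoleAvoiding e := by
  have he := hG.pairing_fst_ne e
  by_cases hx : e.1 = x.1
  · exact hasDipoleAvoiding_self (isParallel_of_fst_eq h hx) he
  by_cases hp : e.1 = (G.pairing x).1
  · exact hasDipoleAvoiding_self (isParallel_of_fst_eq (fun d => (h d).pairing) hp) he
  obtain ⟨a, b, hab, hac, hbc⟩ := exists_other_colors 0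
  exact hasDipoleAvoiding_of_isParallel hab hac hbc (h a) (h 0) (hG.pairing_fst_ne x) hx hp

theorem IsExtremal.hasDipoleAvoiding (hG : G.IsExtremal) (e : G.V) : G.HasDipoleAvoiding e := by
  induction hn : G.b using Nat.strong_induction_on generalizing G with
  | _ n ih =>
  subst hn
  have hcut {S : Set G.B} {u w : G.V} (h : G.IsCut S u w) (he : e.1 ∉ S) :
      G.HasDipoleAvoiding e :=
    h.isGluing.hasDipoleAvoiding (ih _ h.b_inside_lt (h.isGluing.isExtremal_left hG) _ rfl)
      fun x hx => he (hx ▸ x.1.2)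
  obtain ⟨c, x, hx⟩ := hG.exists_faceLen2
  replace hx := hx.isParallel
  have hparallel {a b : Fin 3} {S : Set G.B} (hab : a ≠ b) (hac : a ≠ c) (hbc : b ≠ c)
      (ha : G.IsParallel a x)
      (h : G.IsCut S (G.pairing (G.colPerm b x)) (G.pairing (G.colPerm b (G.pairing x)))) :
      G.HasDipoleAvoiding e := by
    by_cases he : e.1 ∈ S
    · have hxS := h.pairing_left_notMem
      have hpS := h.pairing_right_notMem
      rw [G.invol] at hxS hpS
      exact hasDipoleAvoiding_of_isParallel hab hac hbc ha hx (hG.pairing_fst_ne x)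
        (ne_of_mem_of_not_mem he hxS) (ne_of_mem_of_not_mem he hpS)
    · exact hcut h he
  obtain ⟨a, b, hab, hac, hbc⟩ := exists_other_colors c
  obtain ⟨S, T, hST, ha | hS, hb | hT⟩ := hG.exists_disjoint_isCut hab hac hbc hx
  · refine hG.hasDipoleAvoiding_of_forall_isParallel (x := x) (fun d => ?_) e
    obtain rfl | rfl | rfl := color_eq_or_eq_or_eq a b c hab hac hbc d
    exacts [ha, hb, hx]
  · exact hparallel hab hac hbc ha hT
  · exact hparallel hab.symm hbc hac hb hS
  · by_cases he : e.1 ∈ S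
    · exact hcut hT (hST.notMem_of_mem_left he)
    · exact hcut hS he

end Dipoles

/-! ### Reconstruction of melonic graphs -/

section Isomorphisms

variable {G H : TGraph}

/-- The inverse of an isomorphism. -/
def Iso.symm (φ : Iso G H) : Iso H G where
  toEquiv := φ.toEquiv.symm
  map_pairing v := by rw [symm_apply_eq, φ.map_pairing, apply_symm_apply]
  map_col c v := by rw [symm_apply_eq, φ.map_col, apply_symm_apply]

theorem Iso.b_eq (φ : Iso G H) : G.b = H.b := by
  have hcard := Fintype.card_congr φ.toEquiv
  rw [card_V, card_V] at hcard
  omega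

theorem Iso.numFaces_le (φ : Iso G H) (c : Fin 3) : H.numFaces c ≤ G.numFaces c := by
  rw [numFaces_eq_finrank, numFaces_eq_finrank,
    ← LinearEquiv.finrank_map_eq (LinearEquiv.funCongrLeft (ZMod 2) (ZMod 2) φ.toEquiv)]
  refine Submodule.finrank_mono ?_
  rintro _ ⟨f, ⟨hp, hc⟩, rfl⟩
  exact ⟨fun v => (congrArg f (φ.map_pairing v)).trans (hp _),
    fun v => (congrArg f (φ.map_col c v)).trans (hc _)⟩

theorem Iso.F_eq (φ : Iso G H) : G.F = H.F :=
  Finset.sum_congr rfl fun c _ => (φ.symm.numFaces_le c).antisymm (φ.numFaces_le c)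

theorem Iso.connected (φ : Iso G H) (hH : H.Connected) : G.Connected := by
  rw [connected_iff (ZMod 2)] at hH ⊢
  intro f hp hc u v
  have hf := hH (fun x => f (φ.symm.toEquiv x)) (fun x => by rw [φ.symm.map_pairing, hp])
    (fun c x => by rw [φ.symm.map_col, hc]) (φ.toEquiv u) (φ.toEquiv v)
  simpa only [Iso.symm, symm_apply_apply] using hf

theorem Iso.isExtremal (φ : Iso G H) (hH : H.IsExtremal) : G.IsExtremal :=
  ⟨φ.connected hH.1, by rw [φ.F_eq, φ.b_eq, hH.2]⟩

theorem surjective_of_map_pairing_of_map_colPerm [Nonempty H.V] (hG : G.Connected)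
    {f : H.V → G.V} (hp : ∀ v, f (H.pairing v) = G.pairing (f v))
    (hc : ∀ c v, f (H.colPerm c v) = G.colPerm c (f v)) : Function.Surjective f := by
  have hrange {α : Perm G.V} {β : Perm H.V} (hα : Function.Involutive α)
      (hαβ : ∀ v, f (β v) = α (f v)) (v : G.V) : (α v ∈ Set.range f) = (v ∈ Set.range f) := by
    have hmem : ∀ v ∈ Set.range f, α v ∈ Set.range f := by
      rintro _ ⟨x, rfl⟩
      exact ⟨β x, hαβ x⟩
    exact propext ⟨fun hv => hα v ▸ hmem _ hv, hmem v⟩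
  intro v
  obtain ⟨x⟩ := ‹Nonempty H.V›
  exact ((connected_iff Prop).1 hG (· ∈ Set.range f) (hrange G.invol hp)
    (fun c => hrange (colPerm_involutive c) (hc c)) v (f x)).mpr ⟨x, rfl⟩

end Isomorphisms

namespace IsGluing

variable {G G' H K K' : TGraph} {e : H.V ⊕ K.V ≃ G.V} {e' : H.V ⊕ K.V ≃ G'.V} {p : H.V} {q : K.V}

theorem map_pairing_left (h : IsGluing e p q) (h' : IsGluing e' p q) (x : H.V) :
    e' (e.symm (G.pairing (e (.inl x)))) = G'.pairing (e' (.inl x)) := by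
  by_cases hp : x = p
  · rw [hp, h.pairing_root, h'.pairing_root, symm_apply_apply]
  by_cases hp' : x = H.pairing p
  · rw [hp', h.pairing_root', h'.pairing_root', symm_apply_apply]
  rw [h.left_pairing x hp hp', h'.left_pairing x hp hp', symm_apply_apply]

theorem isIso (h : IsGluing e p q) (h' : IsGluing e' p q) : IsIso G G' := by
  refine ⟨⟨e.symm.trans e', fun v => ?_, fun c v => ?_⟩⟩ <;>
    obtain ⟨x | y, rfl⟩ := e.surjective v
  · simpa using h.map_pairing_left h' x
  · simpa using h.symm.map_pairing_left h'.symm y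
  · simp [← h.left_colPerm, ← h'.left_colPerm]
  · simp [← h.right_colPerm, ← h'.right_colPerm]

theorem comp_iso_right (h : IsGluing e p q) (φ : Iso K' K) {q' : K'.V} (hq : φ.toEquiv q' = q) :
    IsGluing (((Equiv.refl _).sumCongr φ.toEquiv).trans e) p q' where
  left_colPerm := h.left_colPerm
  right_colPerm c y := (congrArg (e ∘ .inr) (φ.map_col c y)).trans (h.right_colPerm c _)
  pairing_root := h.pairing_root.trans (congrArg (e ∘ .inr) hq.symm)
  pairing_root' := h.pairing_root'.trans
    (congrArg (e ∘ .inr) (by rw [φ.map_pairing, hq]))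
  left_pairing := h.left_pairing
  right_pairing y hy hy' := by
    subst hq
    refine (h.right_pairing _ (φ.toEquiv.injective.ne hy) ?_).trans
      (congrArg (e ∘ .inr) (φ.map_pairing y).symm)
    rw [← φ.map_pairing]
    exact φ.toEquiv.injective.ne hy'

end IsGluing

section G2

variable {G : TGraph} {z w : G.V}

theorem b_G2 : G2.b = 2 := Fintype.card_fin 2

theorem connected_G2 : G2.Connected := by
  rw [connected_iff (ZMod 2)]
  intro f hp hc
  have hbubble (i : Fin 2) : f (i, 0) = f ((0 : Fin 2), 0) := by
    fin_cases i
    · rfl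
    · exact hp ((0 : Fin 2), (0 : Fin 4))
  have hroot (v : G2.V) : f v = f ((0 : Fin 2), 0) :=
    (apply_eq_of_fst_eq hc (show v.1 = (v.1, (0 : Fin 4)).1 from rfl)).trans (hbubble v.1)
  exact fun u v => (hroot u).trans (hroot v).symm

theorem exists_apply_bubblePerm_eq : ∀ c, ∃ (s : Fin 4 → ZMod 2) (k : Fin 4),
    (∀ l, s (bubblePerm c l) = s l) ∧ s k ≠ s 0 := by
  intro c
  fin_cases c
  exacts [⟨![0, 0, 1, 1], 2, by decide⟩, ⟨![0, 1, 0, 1], 1, by decide⟩,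
    ⟨![0, 1, 1, 0], 1, by decide⟩]

theorem two_le_numFaces_G2 (c : Fin 3) : 2 ≤ G2.numFaces c := by
  obtain ⟨s, k, hs, hk⟩ := exists_apply_bubblePerm_eq c
  refine Finite.one_lt_card_iff_nontrivial.2
    ⟨Quotient.mk'' ((0 : Fin 2), k), Quotient.mk'' ((0 : Fin 2), (0 : Fin 4)), fun heq => hk ?_⟩
  refine (mem_orbit_closure_iff (ZMod 2)).1 (Quotient.exact heq) (fun v => s v.2) ?_
  rintro _ (rfl | rfl) v
  exacts [rfl, hs v.2]

theorem isExtremal_G2 : G2.IsExtremal := by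
  refine ⟨connected_G2, connected_G2.two_mul_F_le.antisymm ?_⟩
  have h₀ := two_le_numFaces_G2 0
  have h₁ := two_le_numFaces_G2 1
  have h₂ := two_le_numFaces_G2 2
  rw [b_G2, F_eq]
  omega

/-- The vertex of the bubble of `x` whose position relative to `x` is `k`: the color-`c` edge at
the vertex in position `0` leads to the vertex in position `c.succ`. The bitwise operation on the
labels of the vertices encodes the Klein four-group of color-preserving automorphisms of the
bubble. -/
def translate (x : G.V) (k : Fin 4) : G.V := (x.1, x.2 ^^^ k)

theorem translate_zero (x : G.V) : translate x 0 = x := by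
  have h : ∀ k : Fin 4, k ^^^ 0 = k := by decide
  exact Prod.ext rfl (h x.2)

theorem translate_succ (x : G.V) (c : Fin 3) : translate x c.succ = G.colPerm c x := by
  have h : ∀ (c : Fin 3) (k : Fin 4), k ^^^ c.succ = bubblePerm c k := by decide
  exact Prod.ext rfl (h c x.2)

theorem translate_bubblePerm (x : G.V) (c : Fin 3) (k : Fin 4) :
    translate x (bubblePerm c k) = G.colPerm c (translate x k) := by
  have h : ∀ (c : Fin 3) (k l : Fin 4), l ^^^ bubblePerm c k = bubblePerm c (l ^^^ k) := by decide
  exact Prod.ext rfl (h c k x.2)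

theorem translate_injective (x : G.V) : Function.Injective (translate x) := by
  have h : ∀ j k l : Fin 4, j ^^^ k = j ^^^ l → k = l := by decide
  exact fun k l hkl => h x.2 k l (congrArg Prod.snd hkl)

theorem IsDipole.pairing_translate (h : G.IsDipole z w) (hzw : G.pairing z = w) (k : Fin 4) :
    G.pairing (translate z k) = translate w k := by
  induction k using Fin.cases with
  | zero => rw [translate_zero, translate_zero, hzw]
  | succ c => rw [translate_succ, translate_succ, h.pairing_colPerm]

theorem IsDipole.exists_iso_G2 (h : G.IsDipole z w) (hzw : G.pairing z = w) (hG : G.Connected) :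
    ∃ φ : Iso G2 G, φ.toEquiv ((0 : Fin 2), (0 : Fin 4)) = z := by
  let ψ : G2.V → G.V := fun v => translate ((![z, w] : Fin 2 → G.V) v.1) v.2
  have hp (v : G2.V) : ψ (G2.pairing v) = G.pairing (ψ v) := by
    obtain ⟨i, k⟩ := v
    change Fin 2 at i
    fin_cases i
    · exact (h.pairing_translate hzw k).symm
    · exact (h.symm.pairing_translate (by rw [← hzw, G.invol]) k).symm
  have hc (c : Fin 3) (v : G2.V) : ψ (G2.colPerm c v) = G.colPerm c (ψ v) :=
    translate_bubblePerm _ c v.2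
  have hinj : Function.Injective ψ := by
    rintro ⟨i, k⟩ ⟨j, l⟩ heq
    change Fin 2 at i j
    fin_cases i <;> fin_cases j
    · exact congrArg _ (translate_injective z heq)
    · exact absurd (congrArg Prod.fst heq) h.fst_ne
    · exact absurd (congrArg Prod.fst heq) h.symm.fst_ne
    · exact congrArg _ (translate_injective w heq)
  have : Nonempty G2.V := ⟨((0 : Fin 2), (0 : Fin 4))⟩
  exact ⟨⟨Equiv.ofBijective ψ ⟨hinj, surjective_of_map_pairing_of_map_colPerm hG hp hc⟩, hp, hc⟩,
    translate_zero z⟩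

end G2

theorem IsExtremal.isMelonic {G : TGraph} (hG : G.IsExtremal) : IsMelonic G := by
  induction hn : G.b using Nat.strong_induction_on generalizing G with
  | _ n ih =>
  subst hn
  obtain ⟨-, v, -⟩ := hG.exists_faceLen2
  obtain ⟨z, w, hd, -⟩ := hG.hasDipoleAvoiding v
  by_cases hzw : G.pairing z = w
  · obtain ⟨φ, -⟩ := hd.exists_iso_G2 hzw hG.1
    exact .base ⟨φ.symm⟩
  have hcut := hd.isCut (hG.pairing_fst_ne z) (hG.pairing_fst_ne w) hzw
  have hw : hcut.sides (.inl (hcut.inside.pairing (⟨z.1, hcut.left_mem⟩, z.2))) = w :=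
    flip_pairing_left hcut.ne
  have hinside := hcut.isGluing.isDipole_root (hw.symm ▸ hd)
  obtain ⟨φ, hφ⟩ := hinside.exists_iso_G2 rfl (hcut.isGluing.connected_left hG.1)
  have hmelonic := ih _ hcut.b_outside_lt (hcut.isGluing.symm.isExtremal_left hG) rfl
  exact .insert hmelonic _ ((hcut.isGluing.symm.comp_iso_right φ hφ).isIso (isGluing_glue _ _ _ _))

end TGraph

theorem IsMelonic.isExtremal {G : TGraph} (hG : IsMelonic G) : G.IsExtremal := by
  induction hG with
  | base h => exact h.some.isExtremal isExtremal_G2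
  | @insert K _ v _ h hK =>
    exact h.some.isExtremal ((isGluing_glue K G2 v _).isExtremal hK isExtremal_G2)

theorem exists_isMelonic (n : ℕ) : ∃ G : TGraph, IsMelonic G ∧ G.b = 2 * (n + 1) := by
  have isIso_refl (G : TGraph) : IsIso G G := ⟨⟨Equiv.refl _, fun _ => rfl, fun _ _ => rfl⟩⟩
  induction n with
  | zero => exact ⟨G2, .base (isIso_refl _), b_G2⟩
  | succ n ih =>
    obtain ⟨G, hG, hb⟩ := ih
    have hpos : 0 < G.b := by omega
    obtain ⟨β⟩ := Fintype.card_pos_iff.1 hpos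
    refine ⟨G.insertDipole (β, 0), .insert hG (β, 0) (isIso_refl _), ?_⟩
    calc (G.insertDipole (β, 0)).b = G.b + G2.b := Fintype.card_sum
      _ = 2 * (n + 1 + 1) := by rw [hb, b_G2]; ring

theorem TGraph.MaximizesFaces.isExtremal {G : TGraph} (hG : G.MaximizesFaces) (heven : 2 ∣ G.b)
    (hpos : 0 < G.b) : G.IsExtremal := by
  obtain ⟨n, hn⟩ := heven
  obtain ⟨M, hM, hb⟩ := exists_isMelonic (n - 1)
  have hMb : M.b = G.b := by omega
  have hMF := hM.isExtremal.2
  have hle := hG.2 M hM.isExtremal.1 hMb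
  have hbound := hG.1.two_mul_F_le
  exact ⟨hG.1, by omega⟩

theorem even_maximizers_melonic_general (G : TGraph) (heven : 2 ∣ G.b) (hpos : 0 < G.b) :
    (G.MaximizesFaces ↔ IsMelonic G) ∧
      (G.MaximizesFaces → (G.F : ℚ) = 3 / 2 * G.b + 3) := by
  refine ⟨⟨fun hmax => (hmax.isExtremal heven hpos).isMelonic,
    fun hmel => ⟨hmel.isExtremal.1, fun H hH hb => ?_⟩⟩, fun hmax => ?_⟩
  · have hGF := hmel.isExtremal.2
    have hHF := hH.two_mul_F_le
    omega
  · have hGF : (2 * G.F : ℚ) = 3 * G.b + 6 := by exact_mod_cast (hmax.isExtremal heven hpos).2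
    linarith

/-- Among connected graphs of the tetrahedral model with an even
(positive) number `b` of bubbles, the graphs maximizing the number of faces
are exactly the melonic graphs, and they satisfy `F(G) = (3/2) b + 3`. -/
theorem even_maximizers_melonic (G : TGraph) (hG : G.Connected)
    (heven : 2 ∣ G.b) (hpos : 0 < G.b) :
    (G.MaximizesFaces ↔ IsMelonic G) ∧
      (G.MaximizesFaces → (G.F : ℚ) = 3 / 2 * G.b + 3) :=
  even_maximizers_melonic_general G heven hpos
end
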